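/- Let n ≥ 2, M ≥ 1, and let A = (a^{αβ}_{rs})_{1≤r,s≤n, 1≤α,β≤M} be a constant complex coefficient tensor satisfying the Legendre–Hadamard ellipticity condition, with associated second-order system L_A. Fix p ∈ (1,∞) and κ > 0. If u : ℝⁿ₊ → ℂ^M is of class C² and satisfies L_A u = 0 in ℝⁿ₊, the nontangential maximal function N_κ u belongs to L^p(ℝ^{n-1}), and for almost every x' ∈ ℝ^{n-1} the nontangential limit of u at (x',0) exists and equals 0, then u ≡ 0 in ℝⁿ₊. -/

import Mathlib

open MeasureTheory Filter Metric Real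
open scoped ENNReal NNReal Topology

noncomputable section

/-- The point `(x', t)` of `ℝⁿ`, where `x' ∈ ℝ^{n-1}` and `t ∈ ℝ` is the last coordinate. -/
def toUp {n : ℕ} (x' : EuclideanSpace ℝ (Fin (n - 1))) (t : ℝ) :
    EuclideanSpace ℝ (Fin n) :=
  (WithLp.equiv 2 (Fin n → ℝ)).symm
    (fun i => if h : (i : ℕ) < n - 1 then x' ⟨i, h⟩ else t)

/-- The first `n-1` coordinates of a point of `ℝⁿ`. -/
def xinit {n : ℕ} (x : EuclideanSpace ℝ (Fin n)) : EuclideanSpace ℝ (Fin (n - 1)) :=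
  (WithLp.equiv 2 (Fin (n - 1) → ℝ)).symm
    (fun i => x ⟨(i : ℕ), Nat.lt_of_lt_of_le i.isLt (Nat.sub_le n 1)⟩)

/-- The last coordinate of a point of `ℝⁿ`. -/
def xlast {n : ℕ} (x : EuclideanSpace ℝ (Fin n)) : ℝ :=
  if h : 0 < n then x ⟨n - 1, by omega⟩ else 0

/-- The upper half space `ℝⁿ₊`. -/
def upperHalfSpace (n : ℕ) : Set (EuclideanSpace ℝ (Fin n)) := {x | 0 < xlast x}

/-- The embedding `Fin (n-1) → Fin n`. -/
def finUp {n : ℕ} (i : Fin (n - 1)) : Fin n :=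
  ⟨(i : ℕ), Nat.lt_of_lt_of_le i.isLt (Nat.sub_le n 1)⟩

/-- The last index of `Fin n`. -/
def lastIdx (n : ℕ) (h : 0 < n) : Fin n := ⟨n - 1, by omega⟩

/-- Partial derivative along the `i`-th coordinate direction. -/
def pd {n : ℕ} {F : Type*} [NormedAddCommGroup F] [NormedSpace ℝ F]
    (i : Fin n) (u : EuclideanSpace ℝ (Fin n) → F) (x : EuclideanSpace ℝ (Fin n)) : F :=
  fderiv ℝ u x (EuclideanSpace.single i 1)

/-- Iterated mixed partial derivative along the string of coordinate directions `d`. -/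
def mpd {n : ℕ} {F : Type*} [NormedAddCommGroup F] [NormedSpace ℝ F]
    (k : ℕ) (d : Fin k → Fin n) (u : EuclideanSpace ℝ (Fin n) → F)
    (x : EuclideanSpace ℝ (Fin n)) : F :=
  iteratedFDeriv ℝ k u x (fun i => EuclideanSpace.single (d i) 1)

/-- The nontangential approach filter for the cone `Γ_κ(x')` (points written as `(y', t)`). -/
def ntFilter {n : ℕ} (κ : ℝ) (x' : EuclideanSpace ℝ (Fin (n - 1))) :
    Filter ((EuclideanSpace ℝ (Fin (n - 1))) × ℝ) :=
  (nhds (x', (0 : ℝ))) ⊓ Filter.principal {q | 0 < q.2 ∧ dist x' q.1 < κ * q.2}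

/-- The nontangential maximal function (aperture `κ`) of `u : ℝⁿ → F`,
as an `ℝ≥0∞`-valued function on `ℝ^{n-1}`. -/
def ntMax {n : ℕ} {F : Type*} [NormedAddCommGroup F] (κ : ℝ)
    (u : EuclideanSpace ℝ (Fin n) → F) (x' : EuclideanSpace ℝ (Fin (n - 1))) : ℝ≥0∞ :=
  ⨆ (y' : EuclideanSpace ℝ (Fin (n - 1))) (t : ℝ) (_ : 0 < t ∧ dist x' y' < κ * t),
    (‖u (toUp y' t)‖₊ : ℝ≥0∞)

/-- The `L^p` norm (`p ∈ (0,∞]`) of an `ℝ≥0∞`-valued function on `ℝ^m`. -/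
def lpNormE {m : ℕ} (g : EuclideanSpace ℝ (Fin m) → ℝ≥0∞) (p : ℝ≥0∞) : ℝ≥0∞ :=
  if p = ∞ then essSup g volume
  else (∫⁻ x', (g x') ^ p.toReal) ^ (1 / p.toReal)

/-- The Hardy–Littlewood maximal function. -/
def hlMax {m : ℕ} {F : Type*} [NormedAddCommGroup F]
    (f : EuclideanSpace ℝ (Fin m) → F) (x' : EuclideanSpace ℝ (Fin m)) : ℝ≥0∞ :=
  ⨆ (r : ℝ) (_ : 0 < r),
    (volume (ball x' r))⁻¹ * ∫⁻ y' in ball x' r, (‖f y'‖₊ : ℝ≥0∞)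

/-- The Legendre-Hadamard ellipticity condition for the coefficient tensor `A`,
where `A r s α β` stands for `a^{αβ}_{rs}`. -/
def LegendreHadamard {n M : ℕ} (A : Fin n → Fin n → Fin M → Fin M → ℂ) : Prop :=
  ∃ κ₀ : ℝ, 0 < κ₀ ∧ ∀ (ξ : Fin n → ℝ) (η : Fin M → ℂ),
    κ₀ * (∑ r, ξ r ^ 2) * (∑ a, ‖η a‖ ^ 2) ≤
      (∑ r, ∑ s, ∑ a, ∑ b, A r s a b * ξ r * ξ s * (starRingEnd ℂ) (η a) * η b).re

/-- `g` is the weak (distributional) mixed partial derivative of `f` of order `k`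
along the string of directions `d`. -/
def IsWeakDeriv {m : ℕ} {F : Type*} [NormedAddCommGroup F] [NormedSpace ℝ F]
    (k : ℕ) (d : Fin k → Fin m) (f g : EuclideanSpace ℝ (Fin m) → F) : Prop :=
  ∀ φ : EuclideanSpace ℝ (Fin m) → ℝ, ContDiff ℝ (⊤ : ℕ∞) φ → HasCompactSupport φ →
    ∫ x', (mpd k d φ x') • f x' = ((-1 : ℝ) ^ k) • ∫ x', φ x' • g x'

/-- The surface area `ω_{n-1}` of the unit sphere `S^{n-1}` in `ℝⁿ`. -/
def sphereArea (n : ℕ) : ℝ :=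
  (n : ℝ) * (volume (ball (0 : EuclideanSpace ℝ (Fin n)) (1 : ℝ))).toReal

/-- The parabolic dilation `F_t(x') = t^{1-n} F(x'/t)` of a matrix-valued kernel. -/
def matDil {n M : ℕ} (P : EuclideanSpace ℝ (Fin (n - 1)) → Matrix (Fin M) (Fin M) ℂ)
    (t : ℝ) (x' : EuclideanSpace ℝ (Fin (n - 1))) : Matrix (Fin M) (Fin M) ℂ :=
  (t ^ ((1 : ℤ) - (n : ℤ))) • P (t⁻¹ • x')

/-- The convolution `(P_t * f)(x')` of a dilated matrix kernel with a `ℂ^M`-valued function. -/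
def matConv {n M : ℕ} (P : EuclideanSpace ℝ (Fin (n - 1)) → Matrix (Fin M) (Fin M) ℂ)
    (f : EuclideanSpace ℝ (Fin (n - 1)) → EuclideanSpace ℂ (Fin M))
    (t : ℝ) (x' : EuclideanSpace ℝ (Fin (n - 1))) : EuclideanSpace ℂ (Fin M) :=
  (WithLp.equiv 2 (Fin M → ℂ)).symm
    (fun γ => ∫ y', ∑ α, matDil P t (x' - y') γ α * f y' α)

/-! Convolving `u` in the tangential variables with a test function gives a solution `v` in the
half-space. Since `N_κ u ∈ L^p`, `v` and all its tangential derivatives are bounded, they have zero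
boundary values at every boundary point by dominated convergence, and `v (x', t)` tends to zero as
`x'` goes to infinity. Ellipticity makes the coefficient `A_{nn}` invertible, so the system controls
the normal derivative by the tangential ones and `v` vanishes linearly at the boundary. This is what
Caccioppoli's inequality (from Gårding's, by Plancherel) needs to hold on half-balls centred at the
boundary. Applied to successive tangential derivatives it gives
`∫_{B_R⁺} |∂_i^k v|² ≲ R^{n - 2k}`, so `∂_i^k v = 0` for large `k`. A bounded function that is
polynomial along `e_i` is constant along `e_i`, hence `∂_i v = 0`, and decay in that direction gives
`v = 0`. Letting the test function run through mollifiers gives `u = 0`. -/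

lemma sq_norm_le_sum_sq_norm {ι F : Type*} [Fintype ι] [SeminormedAddCommGroup F] (P : ι → F) :
    ‖P‖ ^ 2 ≤ ∑ i, ‖P i‖ ^ 2 := by
  have hP : ‖P‖ ≤ √(∑ i, ‖P i‖ ^ 2) := (pi_norm_le_iff_of_nonneg (Real.sqrt_nonneg _)).2 fun i =>
    Real.le_sqrt_of_sq_le (Finset.single_le_sum (f := fun i => ‖P i‖ ^ 2)
      (fun _ _ => by positivity) (Finset.mem_univ i))
  exact (Real.le_sqrt (norm_nonneg P) (by positivity)).1 hP

lemma contDiff_of_tsupport_subset {E F : Type*} [NormedAddCommGroup E] [NormedSpace ℝ E]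
    [NormedAddCommGroup F] [NormedSpace ℝ F] {k : WithTop ℕ∞} {g : E → F} {U : Set E}
    (hU : IsOpen U) (hg : ContDiffOn ℝ k g U) (hgU : tsupport g ⊆ U) : ContDiff ℝ k g := by
  refine contDiff_iff_contDiffAt.2 fun x => ?_
  by_cases hx : x ∈ tsupport g
  · exact hg.contDiffAt (hU.mem_nhds (hgU hx))
  · exact contDiffAt_const.congr_of_eventuallyEq (notMem_tsupport_iff_eventuallyEq.1 hx)

section PartialDerivatives

variable {n : ℕ} {F G : Type*} [NormedAddCommGroup F] [NormedSpace ℝ F] [NormedAddCommGroup G]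
  [NormedSpace ℝ G] {u v : EuclideanSpace ℝ (Fin n) → F} {U : Set (EuclideanSpace ℝ (Fin n))}

lemma continuous_pd (hu : ContDiff ℝ 1 u) (i : Fin n) : Continuous (pd i u) :=
  (hu.continuous_fderiv one_ne_zero).clm_apply continuous_const

lemma hasCompactSupport_pd (hu : HasCompactSupport u) (i : Fin n) : HasCompactSupport (pd i u) :=
  hu.fderiv_apply ℝ _

lemma pd_eq_zero_of_notMem_tsupport {x : EuclideanSpace ℝ (Fin n)} (hx : x ∉ tsupport u)
    (i : Fin n) : pd i u x = 0 := by
  simp [pd, fderiv_of_notMem_tsupport ℝ hx]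

lemma integrable_comp_pd (hu : ContDiff ℝ 1 u) (hc : HasCompactSupport u) {Φ : (Fin n → F) → ℝ}
    (hΦ : Continuous Φ) (hΦ₀ : Φ 0 = 0) : Integrable fun x => Φ fun r => pd r u x :=
  (hΦ.comp (continuous_pi (continuous_pd hu))).integrable_of_hasCompactSupport <|
    (hc.fderiv ℝ).comp_left (g := fun L : EuclideanSpace ℝ (Fin n) →L[ℝ] F =>
      Φ fun r => L (EuclideanSpace.single r 1)) hΦ₀

lemma integral_pd_eq_zero (hu : ContDiff ℝ 1 u) (hc : HasCompactSupport u) (i : Fin n) :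
    ∫ x, pd i u x = 0 := by
  have hpd : Integrable (pd i u) :=
    (continuous_pd hu i).integrable_of_hasCompactSupport (hasCompactSupport_pd hc i)
  have hparts := integral_smul_fderiv_eq_neg_fderiv_smul_of_integrable (μ := volume) (𝕜 := ℝ)
    (f := fun _ => (1 : ℝ)) (g := u) (v := EuclideanSpace.single i 1) (by simp)
    (by simp only [one_smul]; exact hpd)
    (by simpa using hu.continuous.integrable_of_hasCompactSupport hc) (by simp)
    fun x _ => hu.differentiable one_ne_zero x
  simpa [pd] using hparts

lemma contDiffOn_pd {k m : WithTop ℕ∞} (hU : IsOpen U) (hu : ContDiffOn ℝ m u U) (hk : k + 1 ≤ m)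
    (i : Fin n) : ContDiffOn ℝ k (pd i u) U :=
  (hu.fderiv_of_isOpen hU hk).clm_apply contDiffOn_const

lemma pd_eqOn (hU : IsOpen U) (huv : Set.EqOn u v U) (i : Fin n) :
    Set.EqOn (pd i u) (pd i v) U := fun x hx => by
  simp only [pd, (huv.eventuallyEq_of_mem (hU.mem_nhds hx)).fderiv_eq]

lemma pd_smul {θ : EuclideanSpace ℝ (Fin n) → ℝ} {x : EuclideanSpace ℝ (Fin n)}
    (hθ : DifferentiableAt ℝ θ x) (hu : DifferentiableAt ℝ u x) (i : Fin n) :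
    pd i (fun y => θ y • u y) x = θ x • pd i u x + pd i θ x • u x := by
  simp [pd, fderiv_fun_smul hθ hu]

lemma pd_clm_comp (L : F →L[ℝ] G) {x : EuclideanSpace ℝ (Fin n)} (hu : DifferentiableAt ℝ u x)
    (i : Fin n) : pd i (fun y => L (u y)) x = L (pd i u x) :=
  congrArg (· (EuclideanSpace.single i 1)) (L.hasFDerivAt.comp x hu.hasFDerivAt).fderiv

lemma pd_comm (hU : IsOpen U) (hu : ContDiffOn ℝ 2 u U) (i j : Fin n) :
    Set.EqOn (pd i (pd j u)) (pd j (pd i u)) U := fun x hx => by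
  have hux : ContDiffAt ℝ 2 u x := hu.contDiffAt (hU.mem_nhds hx)
  have hfd : DifferentiableAt ℝ (fderiv ℝ u) x :=
    (hux.fderiv_right (m := 1) (by norm_num)).differentiableAt one_ne_zero
  have hsymm := (hux.isSymmSndFDerivAt (by simp)).eq
    (EuclideanSpace.single i (1 : ℝ)) (EuclideanSpace.single j (1 : ℝ))
  change fderiv ℝ (fun y => fderiv ℝ u y _) x _ = fderiv ℝ (fun y => fderiv ℝ u y _) x _
  simpa [fderiv_clm_apply hfd (differentiableAt_const _)] using hsymm

lemma norm_pd_le (i : Fin n) (u : EuclideanSpace ℝ (Fin n) → F) (x : EuclideanSpace ℝ (Fin n)) :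
    ‖pd i u x‖ ≤ ‖fderiv ℝ u x‖ := by
  simpa [pd] using (fderiv ℝ u x).le_opNorm (EuclideanSpace.single i (1 : ℝ))

end PartialDerivatives

section Mollification

open scoped Convolution

variable {n : ℕ} {F : Type*} [NormedAddCommGroup F] [NormedSpace ℝ F]
  {f : EuclideanSpace ℝ (Fin n) → F}

/-- A smooth bump function at the origin, supported in the ball of radius `1 / (m + 1)`; these
provide an approximate identity as `m → ∞`. -/
def mollifier (n m : ℕ) : ContDiffBump (0 : EuclideanSpace ℝ (Fin n)) where
  rIn := 1 / (2 * (m + 1))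
  rOut := 1 / (m + 1)
  rIn_pos := by positivity
  rIn_lt_rOut := one_div_lt_one_div_of_lt (by positivity) (by linarith [m.cast_nonneg (α := ℝ)])

/-- Convolution of `f` with the `m`-th mollifier, normalised to have integral one. -/
def mollify (m : ℕ) (f : EuclideanSpace ℝ (Fin n) → F) : EuclideanSpace ℝ (Fin n) → F :=
  (mollifier n m).normed volume ⋆[ContinuousLinearMap.lsmul ℝ ℝ, volume] f

lemma rOut_mollifier_le_one (n m : ℕ) : (mollifier n m).rOut ≤ 1 :=
  (div_le_one (by positivity)).2 (by linarith [m.cast_nonneg (α := ℝ)])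

lemma tendsto_mollify [CompleteSpace F] (hf : Continuous f) (x : EuclideanSpace ℝ (Fin n)) :
    Tendsto (fun m => mollify m f x) atTop (𝓝 (f x)) :=
  ContDiffBump.convolution_tendsto_right_of_continuous tendsto_one_div_add_atTop_nhds_zero_nat hf x

lemma contDiff_mollify [CompleteSpace F] (hf : Continuous f) (m : ℕ) :
    ContDiff ℝ (⊤ : ℕ∞) (mollify m f) :=
  (mollifier n m).hasCompactSupport_normed.contDiff_convolution_left _
    (mollifier n m).contDiff_normed hf.locallyIntegrable

lemma hasCompactSupport_mollify (hf : HasCompactSupport f) (m : ℕ) :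
    HasCompactSupport (mollify m f) :=
  (mollifier n m).hasCompactSupport_normed.convolution _ hf

lemma pd_mollify (hf : ContDiff ℝ 1 f) (hc : HasCompactSupport f) (i : Fin n) (m : ℕ) :
    pd i (mollify m f) = mollify m (pd i f) := by
  have hm : LocallyIntegrable ((mollifier n m).normed volume) :=
    (mollifier n m).continuous_normed.locallyIntegrable
  funext x
  calc pd i (mollify m f) x
    _ = _ := by rw [pd, mollify, (hc.hasFDerivAt_convolution_right _ hm hf x).fderiv]
    _ = mollify m (pd i f) x :=
      convolution_precompR_apply _ hm (hc.fderiv ℝ) (hf.continuous_fderiv one_ne_zero) x _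

lemma norm_mollify_le [CompleteSpace F] (hf : Continuous f) {C : ℝ} (hC : 0 ≤ C)
    {x : EuclideanSpace ℝ (Fin n)} (hfC : ∀ y ∈ ball x 1, ‖f y‖ ≤ C) (m : ℕ) :
    ‖mollify m f x‖ ≤ C := by
  rw [← dist_zero_right]
  exact dist_convolution_le hC (mollifier n m).support_normed_eq.subset
    (mollifier n m).nonneg_normed (mollifier n m).integral_normed hf.aestronglyMeasurable
    fun y hy => by simpa using hfC y (ball_subset_ball (rOut_mollifier_le_one n m) hy)

lemma exists_norm_mollify_le_indicator [CompleteSpace F] (hf : Continuous f)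
    (hc : HasCompactSupport f) : ∃ C R : ℝ, ∀ m x,
      ‖mollify m f x‖ ≤ (closedBall (0 : EuclideanSpace ℝ (Fin n)) R).indicator (fun _ => C) x := by
  obtain ⟨C, hC⟩ := hc.exists_bound_of_continuous hf
  obtain ⟨R, hR⟩ := hc.isCompact.isBounded.subset_closedBall 0
  refine ⟨C, R + 1, fun m x => ?_⟩
  by_cases hx : x ∈ closedBall (0 : EuclideanSpace ℝ (Fin n)) (R + 1)
  · rw [Set.indicator_of_mem hx]
    exact norm_mollify_le hf ((norm_nonneg _).trans (hC x)) (fun y _ => hC y) m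
  · rw [Set.indicator_of_notMem hx]
    refine norm_mollify_le hf le_rfl (fun y hy => ?_) m
    have hy' : y ∉ closedBall (0 : EuclideanSpace ℝ (Fin n)) R := fun h => hx <| by
      rw [mem_closedBall] at h ⊢
      linarith [dist_triangle x y 0, mem_ball'.1 hy]
    rw [image_eq_zero_of_notMem_tsupport fun h => hy' (hR h), norm_zero]

lemma tendsto_integral_comp_mollify {ι : Type*} [Fintype ι] [CompleteSpace F]
    {f : ι → EuclideanSpace ℝ (Fin n) → F} (hf : ∀ i, Continuous (f i))
    (hc : ∀ i, HasCompactSupport (f i)) {Φ : (ι → F) → ℝ} (hΦ : Continuous Φ) {K : ℝ}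
    (hK : ∀ P, |Φ P| ≤ K * ∑ i, ‖P i‖ ^ 2) :
    Tendsto (fun m => ∫ x, Φ fun i => mollify m (f i) x) atTop (𝓝 (∫ x, Φ fun i => f i x)) := by
  choose C R hCR using fun i => exists_norm_mollify_le_indicator (hf i) (hc i)
  refine tendsto_integral_of_dominated_convergence (fun x => |K| * ∑ i,
    (closedBall (0 : EuclideanSpace ℝ (Fin n)) (R i)).indicator (fun _ => C i ^ 2) x) ?_ ?_ ?_ ?_
  · exact fun m => (hΦ.comp (continuous_pi fun i =>
      (contDiff_mollify (hf i) m).continuous)).aestronglyMeasurable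
  · exact (integrable_finsetSum _ fun i _ => (integrable_indicator_iff
      measurableSet_closedBall).2 (integrableOn_const measure_closedBall_lt_top.ne)).const_mul _
  · refine fun m => .of_forall fun x => (hK _).trans ?_
    refine mul_le_mul (le_abs_self K) (Finset.sum_le_sum fun i _ => ?_) (by positivity)
      (abs_nonneg K)
    refine (pow_le_pow_left₀ (norm_nonneg _) (hCR i m x) 2).trans_eq ?_
    by_cases hx : x ∈ closedBall (0 : EuclideanSpace ℝ (Fin n)) (R i) <;> simp [hx]
  · exact .of_forall fun x => (hΦ.tendsto _).comp
      (tendsto_pi_nhds.2 fun i => tendsto_mollify (hf i) x)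

end Mollification

section Garding

open scoped FourierTransform SchwartzMap LineDeriv

variable {n : ℕ} {W : Type*} [NormedAddCommGroup W] [InnerProductSpace ℂ W]
  {A : Fin n → Fin n → W →L[ℂ] W}

/-- The real bilinear form `∑ Re ⟨P_r, A_{rs} Q_s⟩` on `n`-tuples of vectors. Evaluated on gradients
it is the integrand of the weak form of the system `∑ A_{rs} ∂_r ∂_s u = 0`. -/
def gradForm (A : Fin n → Fin n → W →L[ℂ] W) (P Q : Fin n → W) : ℝ :=
  ∑ r, ∑ s, (inner ℂ (P r) (A r s (Q s))).re

/-- The Legendre–Hadamard condition with constant `κ₀`, for operator-valued coefficients: the form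
`gradForm A` is coercive on rank-one tuples `ξ ⊗ η`. -/
def IsElliptic (A : Fin n → Fin n → W →L[ℂ] W) (κ₀ : ℝ) : Prop :=
  ∀ (ξ : Fin n → ℝ) (η : W),
    κ₀ * ∑ r, ‖ξ r • η‖ ^ 2 ≤ gradForm A (fun r => ξ r • η) fun s => ξ s • η

lemma continuous_gradForm (A : Fin n → Fin n → W →L[ℂ] W) :
    Continuous fun P : (Fin n → W) × (Fin n → W) => gradForm A P.1 P.2 := by
  unfold gradForm
  fun_prop

/-- Subtracting a multiple of the Laplacian turns coercivity into nonnegativity. -/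
lemma gradForm_sub_single (A : Fin n → Fin n → W →L[ℂ] W) (c : ℝ) (P : Fin n → W) :
    gradForm (fun r s => A r s - Pi.single (M := fun _ => W →L[ℂ] W) r ((c : ℂ) • 1) s) P P =
      gradForm A P P - c * ∑ r, ‖P r‖ ^ 2 := by
  have hdiag : ∀ r, ∑ s, (inner ℂ (P r)
      (Pi.single (M := fun _ => W →L[ℂ] W) r ((c : ℂ) • 1) s (P s))).re = c * ‖P r‖ ^ 2 := by
    intro r
    rw [Finset.sum_eq_single r (fun s _ hs => by simp [hs]) (by simp)]
    simp [inner_self_eq_norm_sq_to_K, ← Complex.ofReal_pow]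
  simp only [gradForm, sub_apply, inner_sub_right, Complex.sub_re, Finset.sum_sub_distrib, hdiag,
    Finset.mul_sum]

lemma abs_gradForm_le (A : Fin n → Fin n → W →L[ℂ] W) (P Q : Fin n → W) :
    |gradForm A P Q| ≤ (∑ r, ∑ s, ‖A r s‖) * (‖P‖ * ‖Q‖) := by
  simp only [gradForm, Finset.sum_mul]
  refine (Finset.abs_sum_le_sum_abs _ _).trans (Finset.sum_le_sum fun r _ =>
    (Finset.abs_sum_le_sum_abs _ _).trans (Finset.sum_le_sum fun s _ => ?_))
  calc |(inner ℂ (P r) (A r s (Q s))).re|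
    _ ≤ ‖P r‖ * ‖A r s (Q s)‖ := (Complex.abs_re_le_norm _).trans (norm_inner_le_norm _ _)
    _ ≤ ‖P‖ * (‖A r s‖ * ‖Q‖) := by
      gcongr
      exacts [norm_le_pi_norm P r, (A r s).le_opNorm_of_le (norm_le_pi_norm Q s)]
    _ = ‖A r s‖ * (‖P‖ * ‖Q‖) := by ring

lemma integrable_inner_schwartz (f g : 𝓢(EuclideanSpace ℝ (Fin n), W)) (T : W →L[ℂ] W) :
    Integrable fun x => inner ℂ (f x) (T (g x)) := by
  have hfg : Integrable fun x => ‖f x‖ * ‖g x‖ :=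
    (f.memLp 2).norm.integrable_mul (g.memLp 2).norm
  refine (hfg.const_mul ‖T‖).mono' (by fun_prop) (.of_forall fun x => ?_)
  calc ‖inner ℂ (f x) (T (g x))‖
    _ ≤ ‖f x‖ * (‖T‖ * ‖g x‖) := (norm_inner_le_norm _ _).trans (by gcongr; exact T.le_opNorm _)
    _ = ‖T‖ * (‖f x‖ * ‖g x‖) := by ring

lemma fourier_lineDerivOp_single (f : 𝓢(EuclideanSpace ℝ (Fin n), W)) (r : Fin n)
    (ξ : EuclideanSpace ℝ (Fin n)) :
    𝓕 (∂_{EuclideanSpace.single r (1 : ℝ)} f) ξ = ξ r • (2 * π * Complex.I) • 𝓕 f ξ := by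
  have hgrowth : (inner ℝ · (EuclideanSpace.single r (1 : ℝ)) :
      EuclideanSpace ℝ (Fin n) → ℝ).HasTemperateGrowth := by fun_prop
  rw [SchwartzMap.fourier_lineDerivOp_eq, smul_apply, SchwartzMap.smulLeftCLM_apply hgrowth]
  simp [EuclideanSpace.inner_single_right, smul_comm (ξ r)]

lemma integral_gradForm_schwartz (f : Fin n → 𝓢(EuclideanSpace ℝ (Fin n), W)) :
    ∫ x, gradForm A (fun r => f r x) (fun s => f s x) =
      (∑ r, ∑ s, ∫ x, inner ℂ (f r x) (A r s (f s x))).re := by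
  have hint := fun r s => integrable_inner_schwartz (f r) (f s) (A r s)
  calc ∫ x, gradForm A (fun r => f r x) (fun s => f s x)
    _ = ∫ x, RCLike.re (∑ r, ∑ s, inner ℂ (f r x) (A r s (f s x))) := by
      simp only [gradForm, ← Complex.re_sum, RCLike.re_eq_complex_re]
    _ = (∑ r, ∑ s, ∫ x, inner ℂ (f r x) (A r s (f s x))).re := by
      rw [integral_re (integrable_finsetSum _ fun r _ => integrable_finsetSum _ fun s _ =>
        hint r s), integral_finsetSum _ fun r _ => integrable_finsetSum _ fun s _ => hint r s]
      exact congrArg _ (Finset.sum_congr rfl fun r _ => integral_finsetSum _ fun s _ => hint r s)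

variable [CompleteSpace W]

lemma integral_gradForm_fourier (f : Fin n → 𝓢(EuclideanSpace ℝ (Fin n), W)) :
    ∫ ξ, gradForm A (fun r => 𝓕 (f r) ξ) (fun s => 𝓕 (f s) ξ) =
      ∫ x, gradForm A (fun r => f r x) (fun s => f s x) := by
  simp only [integral_gradForm_schwartz]
  exact congrArg Complex.re (Finset.sum_congr rfl fun r _ => Finset.sum_congr rfl fun s _ =>
    SchwartzMap.integral_sesq_fourier_fourier (f r) (f s)
      (ContinuousLinearMap.toSesqForm (A r s)))

/-- By Plancherel the integral is that of `gradForm A` on rank-one tuples. -/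
lemma integral_gradForm_pd_schwartz_nonneg (hA : IsElliptic A 0)
    (w : 𝓢(EuclideanSpace ℝ (Fin n), W)) :
    0 ≤ ∫ x, gradForm A (fun r => pd r w x) (fun s => pd s w x) := by
  have hplancherel := integral_gradForm_fourier (A := A)
    fun r => ∂_{EuclideanSpace.single r (1 : ℝ)} w
  simp only [fourier_lineDerivOp_single] at hplancherel
  exact (integral_nonneg fun ξ => by simpa using hA ξ _).trans_eq hplancherel

lemma integral_gradForm_pd_nonneg (hA : IsElliptic A 0) {w : EuclideanSpace ℝ (Fin n) → W}
    (hw : ContDiff ℝ 1 w) (hc : HasCompactSupport w) :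
    0 ≤ ∫ x, gradForm A (fun r => pd r w x) (fun s => pd s w x) := by
  have hlim := tendsto_integral_comp_mollify (fun r => continuous_pd hw r)
    (fun r => hasCompactSupport_pd hc r) (Φ := fun P => gradForm A P P)
    (K := ∑ r, ∑ s, ‖A r s‖) ((continuous_gradForm A).comp (continuous_id.prodMk continuous_id))
    fun P => (abs_gradForm_le A P P).trans (by
      gcongr
      exact (sq ‖P‖).symm.trans_le (sq_norm_le_sum_sq_norm P))
  refine ge_of_tendsto' hlim fun m => ?_
  simp only [← pd_mollify hw hc]
  exact integral_gradForm_pd_schwartz_nonneg hA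
    ((hasCompactSupport_mollify hc m).toSchwartzMap (contDiff_mollify hw.continuous m))

lemma garding_inequality {κ₀ : ℝ} (hA : IsElliptic A κ₀) {w : EuclideanSpace ℝ (Fin n) → W}
    (hw : ContDiff ℝ 1 w) (hc : HasCompactSupport w) :
    κ₀ * ∫ x, ∑ r, ‖pd r w x‖ ^ 2 ≤ ∫ x, gradForm A (fun r => pd r w x) (fun s => pd s w x) := by
  have hA' : IsElliptic (fun r s =>
      A r s - Pi.single (M := fun _ => W →L[ℂ] W) r ((κ₀ : ℂ) • 1) s) 0 := fun ξ η => by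
    rw [zero_mul, gradForm_sub_single, sub_nonneg]
    exact hA ξ η
  have hnonneg := integral_gradForm_pd_nonneg hA' hw hc
  simp only [gradForm_sub_single] at hnonneg
  rw [integral_sub, integral_const_mul] at hnonneg
  · linarith
  · exact integrable_comp_pd hw hc
      ((continuous_gradForm A).comp (continuous_id.prodMk continuous_id)) (by simp [gradForm])
  · exact (integrable_comp_pd hw hc (Φ := fun P => ∑ r, ‖P r‖ ^ 2) (by fun_prop)
      (by simp)).const_mul κ₀

end Garding

section Caccioppoli

variable {n : ℕ} {W : Type*} [NormedAddCommGroup W] [InnerProductSpace ℂ W]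
  {A : Fin n → Fin n → W →L[ℂ] W} {U : Set (EuclideanSpace ℝ (Fin n))}
  {v ψ : EuclideanSpace ℝ (Fin n) → W}

/-- `v` solves the homogeneous second-order system `∑ A_{rs} ∂_r ∂_s v = 0` in `U`. -/
def SolvesSystemOn (A : Fin n → Fin n → W →L[ℂ] W) (v : EuclideanSpace ℝ (Fin n) → W)
    (U : Set (EuclideanSpace ℝ (Fin n))) : Prop :=
  ∀ x ∈ U, ∑ r, ∑ s, A r s (pd r (pd s v) x) = 0

lemma pd_re_inner {x : EuclideanSpace ℝ (Fin n)} (hψ : DifferentiableAt ℝ ψ x)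
    (hv : DifferentiableAt ℝ v x) (T : W →L[ℂ] W) (i : Fin n) :
    pd i (fun y => (inner ℂ (ψ y) (T (v y))).re) x =
      (inner ℂ (pd i ψ x) (T (v x))).re + (inner ℂ (ψ x) (T (pd i v x))).re := by
  have hTv : DifferentiableAt ℝ (fun y => T (v y)) x :=
    (T.restrictScalars ℝ).differentiableAt.comp x hv
  have hre := pd_clm_comp Complex.reCLM (hψ.inner ℂ hTv) i
  have hT := pd_clm_comp (T.restrictScalars ℝ) hv i
  simp only [Complex.reCLM_apply, ContinuousLinearMap.coe_restrictScalars'] at hre hT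
  rw [hre, ← hT, pd, fderiv_inner_apply ℂ hψ hTv, Complex.add_re, add_comm]
  rfl

lemma gradForm_pd_eq_sum_pd {x : EuclideanSpace ℝ (Fin n)} (hU : IsOpen U) (hx : x ∈ U)
    (hv : ContDiffOn ℝ 2 v U) (hsol : SolvesSystemOn A v U) (hψ : DifferentiableAt ℝ ψ x) :
    gradForm A (fun r => pd r ψ x) (fun s => pd s v x) =
      ∑ r, ∑ s, pd r (fun y => (inner ℂ (ψ y) (A r s (pd s v y))).re) x := by
  have hdiff : ∀ s, DifferentiableAt ℝ (pd s v) x := fun s =>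
    ((contDiffOn_pd hU hv (k := 1) (by norm_num) s).differentiableOn one_ne_zero).differentiableAt
      (hU.mem_nhds hx)
  have hzero : ∑ r, ∑ s, (inner ℂ (ψ x) (A r s (pd r (pd s v) x))).re = 0 := by
    simp only [← Complex.re_sum, ← inner_sum, hsol x hx, inner_zero_right, Complex.zero_re]
  simp only [pd_re_inner hψ (hdiff _), Finset.sum_add_distrib, hzero, add_zero, gradForm]

/-- The integrand is the divergence of a compactly supported field. -/
lemma integral_gradForm_pd_eq_zero (hU : IsOpen U) (hv : ContDiffOn ℝ 2 v U)
    (hsol : SolvesSystemOn A v U) (hψ : ContDiff ℝ 1 ψ) (hc : HasCompactSupport ψ)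
    (hψU : tsupport ψ ⊆ U) :
    ∫ x, gradForm A (fun r => pd r ψ x) (fun s => pd s v x) = 0 := by
  set field : Fin n → Fin n → EuclideanSpace ℝ (Fin n) → ℝ :=
    fun r s x => (inner ℂ (ψ x) (A r s (pd s v x))).re
  have hsupp : ∀ r s, Function.support (field r s) ⊆ Function.support ψ := fun r s x hx hψx =>
    hx (by simp [field, hψx])
  have hfield : ∀ r s, ContDiff ℝ 1 (field r s) := fun r s => by
    refine contDiff_of_tsupport_subset hU ?_ ((closure_mono (hsupp r s)).trans hψU)
    exact Complex.reCLM.contDiff.comp_contDiffOn (hψ.contDiffOn.inner ℂ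
      (((A r s).restrictScalars ℝ).contDiff.comp_contDiffOn (contDiffOn_pd hU hv (by norm_num) s)))
  have hfieldc : ∀ r s, HasCompactSupport (field r s) := fun r s => hc.mono (hsupp r s)
  have hdiv : ∀ x, gradForm A (fun r => pd r ψ x) (fun s => pd s v x) =
      ∑ r, ∑ s, pd r (field r s) x := fun x => by
    by_cases hx : x ∈ tsupport ψ
    · exact gradForm_pd_eq_sum_pd hU (hψU hx) hv hsol (hψ.differentiable one_ne_zero x)
    · have hpdfield : ∀ r s, pd r (field r s) x = 0 := fun r s =>
        pd_eq_zero_of_notMem_tsupport (fun h => hx (closure_mono (hsupp r s) h)) r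
      simp [gradForm, pd_eq_zero_of_notMem_tsupport hx, hpdfield]
  have hint : ∀ r s, Integrable (pd r (field r s)) := fun r s =>
    (continuous_pd (hfield r s) r).integrable_of_hasCompactSupport
      (hasCompactSupport_pd (hfieldc r s) r)
  simp only [hdiv]
  rw [integral_finsetSum _ fun r _ => integrable_finsetSum _ fun s _ => hint r s]
  refine Finset.sum_eq_zero fun r _ => ?_
  rw [integral_finsetSum _ fun s _ => hint r s]
  exact Finset.sum_eq_zero fun s _ => integral_pd_eq_zero (hfield r s) (hfieldc r s) r

/-- With `P = ∇(θ v)` and `T = v ∇θ` one has `(P + T, P - T) = (∇(θ² v), ∇v)`, so only the terms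
controlled by `T` survive integration. -/
lemma gradForm_self_le_add_sub (A : Fin n → Fin n → W →L[ℂ] W) {κ₀ : ℝ} (hκ₀ : 0 < κ₀)
    (P T : Fin n → W) :
    gradForm A P P ≤ gradForm A (P + T) (P - T) + κ₀ / 2 * ∑ r, ‖P r‖ ^ 2 +
      (2 * (∑ r, ∑ s, ‖A r s‖) ^ 2 / κ₀ + ∑ r, ∑ s, ‖A r s‖) * ‖T‖ ^ 2 := by
  have hexpand : gradForm A P P =
      gradForm A (P + T) (P - T) + gradForm A P T - gradForm A T P + gradForm A T T := by
    simp only [gradForm, Pi.add_apply, Pi.sub_apply, map_sub, inner_add_left, inner_sub_right,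
      Complex.add_re, Complex.sub_re, Finset.sum_add_distrib, Finset.sum_sub_distrib]
    ring
  have hPT := (le_abs_self _).trans (abs_gradForm_le A P T)
  have hTP := (neg_le_abs _).trans (abs_gradForm_le A T P)
  have hTT := (le_abs_self _).trans (abs_gradForm_le A T T)
  have hP := mul_le_mul_of_nonneg_left (sq_norm_le_sum_sq_norm P) (half_pos hκ₀).le
  set Λ := ∑ r, ∑ s, ‖A r s‖
  have hyoung : 2 * Λ * (‖P‖ * ‖T‖) ≤ κ₀ / 2 * ‖P‖ ^ 2 + 2 * Λ ^ 2 / κ₀ * ‖T‖ ^ 2 := by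
    have hsq : κ₀ / 2 * ‖P‖ ^ 2 + 2 * Λ ^ 2 / κ₀ * ‖T‖ ^ 2 - 2 * Λ * (‖P‖ * ‖T‖) =
        κ₀ / 2 * (‖P‖ - 2 * Λ / κ₀ * ‖T‖) ^ 2 := by
      field_simp
      ring
    linarith [show 0 ≤ κ₀ / 2 * (‖P‖ - 2 * Λ / κ₀ * ‖T‖) ^ 2 by positivity]
  linarith

section

variable {θ : EuclideanSpace ℝ (Fin n) → ℝ}

lemma norm_pd_smul_le (x : EuclideanSpace ℝ (Fin n)) :
    ‖fun r => pd r θ x • v x‖ ≤ ‖fderiv ℝ θ x‖ * ‖v x‖ :=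
  (pi_norm_le_iff_of_nonneg (by positivity)).2 fun r => by
    rw [norm_smul]
    gcongr
    exact norm_pd_le r θ x

lemma continuous_pd_smul (hU : IsOpen U) (hv : ContinuousOn v U) (hθ : ContDiff ℝ 1 θ)
    (hθU : tsupport θ ⊆ U) : Continuous fun x r => pd r θ x • v x :=
  continuous_pi fun r => contDiff_zero.1 <| contDiff_of_tsupport_subset hU
    (contDiffOn_zero.2 ((continuous_pd hθ r).continuousOn.smul hv))
    (((tsupport_smul_subset_left _ v).trans
      (tsupport_fderiv_apply_subset ℝ _)).trans hθU)

lemma smul_pd_eq_sub (hU : IsOpen U) (hv : DifferentiableOn ℝ v U) (hθ : Differentiable ℝ θ)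
    (hθU : tsupport θ ⊆ U) (x : EuclideanSpace ℝ (Fin n)) (r : Fin n) :
    θ x • pd r v x = pd r (fun y => θ y • v y) x - pd r θ x • v x := by
  by_cases hx : x ∈ tsupport θ
  · rw [pd_smul (hθ x) (hv.differentiableAt (hU.mem_nhds (hθU hx))), add_sub_cancel_right]
  · have hx' : x ∉ tsupport fun y => θ y • v y :=
      fun h => hx (tsupport_smul_subset_left θ v h)
    simp [pd_eq_zero_of_notMem_tsupport hx, pd_eq_zero_of_notMem_tsupport hx',
      image_eq_zero_of_notMem_tsupport hx]

lemma gradForm_pd_sq_smul_eq (hU : IsOpen U) (hv : ContDiffOn ℝ 1 v U) (hθ : ContDiff ℝ 1 θ)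
    (hθU : tsupport θ ⊆ U) (x : EuclideanSpace ℝ (Fin n)) :
    gradForm A (fun r => pd r (fun y => θ y • θ y • v y) x) (fun s => pd s v x) =
      gradForm A ((fun r => pd r (fun y => θ y • v y) x) + fun r => pd r θ x • v x)
        ((fun r => pd r (fun y => θ y • v y) x) - fun r => pd r θ x • v x) := by
  have hw : ContDiff ℝ 1 fun y => θ y • v y := contDiff_of_tsupport_subset hU
    (hθ.contDiffOn.smul hv) ((tsupport_smul_subset_left θ v).trans hθU)
  have hleft : ∀ r, pd r (fun y => θ y • θ y • v y) x =
      θ x • (pd r (fun y => θ y • v y) x + pd r θ x • v x) := fun r => by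
    rw [pd_smul (hθ.differentiable one_ne_zero x) (hw.differentiable one_ne_zero x), smul_add,
      smul_comm (θ x) (pd r θ x)]
  have hright := smul_pd_eq_sub hU (hv.differentiableOn one_ne_zero)
    (hθ.differentiable one_ne_zero) hθU x
  simp only [gradForm, Pi.add_apply, Pi.sub_apply, ← hright, hleft]
  refine Finset.sum_congr rfl fun r _ => Finset.sum_congr rfl fun s _ => ?_
  rw [ContinuousLinearMap.map_smul_of_tower, inner_smul_left_eq_smul, inner_smul_right_eq_smul]

lemma integrable_comp_pd_smul (hU : IsOpen U) (hv : ContDiffOn ℝ 1 v U) (hθ : ContDiff ℝ 1 θ)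
    (hc : HasCompactSupport θ) (hθU : tsupport θ ⊆ U) {Φ : (Fin n → W) → (Fin n → W) → ℝ}
    (hΦ : Continuous (Function.uncurry Φ)) (hΦ₀ : Φ 0 0 = 0) :
    Integrable fun x => Φ (fun r => pd r (fun y => θ y • v y) x) fun r => pd r θ x • v x := by
  have hw : ContDiff ℝ 1 fun y => θ y • v y := contDiff_of_tsupport_subset hU
    (hθ.contDiffOn.smul hv) ((tsupport_smul_subset_left θ v).trans hθU)
  refine (hΦ.comp ((continuous_pi (continuous_pd hw)).prodMk
    (continuous_pd_smul hU hv.continuousOn hθ hθU))).integrable_of_hasCompactSupport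
      (HasCompactSupport.comp_left (HasCompactSupport.intro hc fun x hx => ?_) hΦ₀)
  simp [funext_iff, pd_eq_zero_of_notMem_tsupport hx,
    pd_eq_zero_of_notMem_tsupport fun h => hx (tsupport_smul_subset_left θ v h)]

lemma integral_sum_sq_norm_pd_smul_le [CompleteSpace W] {κ₀ : ℝ} (hκ₀ : 0 < κ₀)
    (hA : IsElliptic A κ₀) (hU : IsOpen U) (hv : ContDiffOn ℝ 2 v U) (hsol : SolvesSystemOn A v U)
    (hθ : ContDiff ℝ 1 θ) (hc : HasCompactSupport θ) (hθU : tsupport θ ⊆ U) :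
    κ₀ / 2 * ∫ x, ∑ r, ‖pd r (fun y => θ y • v y) x‖ ^ 2 ≤
      (2 * (∑ r, ∑ s, ‖A r s‖) ^ 2 / κ₀ + ∑ r, ∑ s, ‖A r s‖) *
        ∫ x, ‖fun r => pd r θ x • v x‖ ^ 2 := by
  have hv₁ : ContDiffOn ℝ 1 v U := hv.of_le one_le_two
  have hsupp : ∀ f : EuclideanSpace ℝ (Fin n) → W, tsupport (fun y => θ y • f y) ⊆ U := fun f =>
    (tsupport_smul_subset_left θ f).trans hθU
  have hw : ContDiff ℝ 1 fun y => θ y • v y :=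
    contDiff_of_tsupport_subset hU (hθ.contDiffOn.smul hv₁) (hsupp v)
  have hgarding := garding_inequality hA hw hc.smul_right
  have hweak := integral_gradForm_pd_eq_zero (ψ := fun y => θ y • θ y • v y) hU hv hsol
    (hθ.smul hw) hc.smul_right (hsupp _)
  simp only [gradForm_pd_sq_smul_eq hU hv₁ hθ hθU] at hweak
  set Λ := ∑ r, ∑ s, ‖A r s‖
  have hG := continuous_gradForm A
  have hint₁ := integrable_comp_pd_smul hU hv₁ hθ hc hθU
    (Φ := fun P T => gradForm A (P + T) (P - T))
    (hG.comp ((continuous_fst.add continuous_snd).prodMk (continuous_fst.sub continuous_snd)))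
    (by simp [gradForm])
  have hint₂ := integrable_comp_pd_smul hU hv₁ hθ hc hθU
    (Φ := fun P _ => κ₀ / 2 * ∑ r, ‖P r‖ ^ 2) (by fun_prop) (by simp)
  have hint₃ := integrable_comp_pd_smul hU hv₁ hθ hc hθU
    (Φ := fun _ T => (2 * Λ ^ 2 / κ₀ + Λ) * ‖T‖ ^ 2) (by fun_prop) (by simp)
  have hmono := integral_mono (integrable_comp_pd_smul hU hv₁ hθ hc hθU
    (Φ := fun P _ => gradForm A P P) (hG.comp (continuous_fst.prodMk continuous_fst))
    (by simp [gradForm])) ((hint₁.add hint₂).add hint₃) fun x => gradForm_self_le_add_sub A hκ₀ _ _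
  rw [integral_add' (hint₁.add hint₂) hint₃, integral_add' hint₁ hint₂, integral_const_mul,
    integral_const_mul, hweak] at hmono
  linarith

lemma integral_sq_norm_smul_pd_le [CompleteSpace W] {κ₀ : ℝ} (hκ₀ : 0 < κ₀)
    (hA : IsElliptic A κ₀) (hU : IsOpen U) (hv : ContDiffOn ℝ 2 v U) (hsol : SolvesSystemOn A v U)
    (hθ : ContDiff ℝ 1 θ) (hc : HasCompactSupport θ) (hθU : tsupport θ ⊆ U) (j : Fin n) :
    ∫ x, ‖θ x • pd j v x‖ ^ 2 ≤
      (4 / κ₀ * (2 * (∑ r, ∑ s, ‖A r s‖) ^ 2 / κ₀ + ∑ r, ∑ s, ‖A r s‖) + 2) *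
        ∫ x, ‖fun r => pd r θ x • v x‖ ^ 2 := by
  have hv₁ : ContDiffOn ℝ 1 v U := hv.of_le one_le_two
  have hint₁ := integrable_comp_pd_smul hU hv₁ hθ hc hθU (Φ := fun P T => ‖P j - T j‖ ^ 2)
    (by fun_prop) (by simp)
  have hint₂ := integrable_comp_pd_smul hU hv₁ hθ hc hθU (Φ := fun P _ => 2 * ∑ r, ‖P r‖ ^ 2)
    (by fun_prop) (by simp)
  have hint₃ := integrable_comp_pd_smul hU hv₁ hθ hc hθU (Φ := fun _ T => 2 * ‖T‖ ^ 2)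
    (by fun_prop) (by simp)
  have hpoint : ∀ P T : Fin n → W, ‖P j - T j‖ ^ 2 ≤ 2 * ∑ r, ‖P r‖ ^ 2 + 2 * ‖T‖ ^ 2 :=
    fun P T => by
      have hPT : ‖P j - T j‖ ≤ ‖P‖ + ‖T‖ := (norm_le_pi_norm (P - T) j).trans (norm_sub_le P T)
      nlinarith [norm_nonneg (P j - T j), sq_norm_le_sum_sq_norm P, sq_nonneg (‖P‖ - ‖T‖)]
  have hmono := integral_mono hint₁ (hint₂.add hint₃) fun x =>
    hpoint (fun r => pd r (fun y => θ y • v y) x) fun r => pd r θ x • v x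
  rw [integral_add' hint₂ hint₃, integral_const_mul, integral_const_mul] at hmono
  have hgrad := mul_le_mul_of_nonneg_left
    (integral_sum_sq_norm_pd_smul_le hκ₀ hA hU hv hsol hθ hc hθU) (show 0 ≤ 4 / κ₀ by positivity)
  simp only [smul_pd_eq_sub hU (hv₁.differentiableOn one_ne_zero)
    (hθ.differentiable one_ne_zero) hθU]
  calc _ ≤ _ := hmono
    _ = 4 / κ₀ * (κ₀ / 2 * ∫ x, ∑ r, ‖pd r (fun y => θ y • v y) x‖ ^ 2) +
        2 * ∫ x, ‖fun r => pd r θ x • v x‖ ^ 2 := by field_simp; ring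
    _ ≤ _ := (add_le_add_left hgrad _).trans_eq (by ring)

end

lemma lintegral_enorm_sq_eq_ofReal {α F : Type*} [MeasurableSpace α] {μ : Measure α}
    [SeminormedAddCommGroup F] {f : α → F} (hf : Integrable (fun x => ‖f x‖ ^ 2) μ) :
    ∫⁻ x, ‖f x‖ₑ ^ 2 ∂μ = ENNReal.ofReal (∫ x, ‖f x‖ ^ 2 ∂μ) := by
  rw [ofReal_integral_eq_lintegral_ofReal hf (.of_forall fun x => by positivity)]
  simp only [ENNReal.ofReal_pow (norm_nonneg _), ofReal_norm]

lemma caccioppoli_inequality [CompleteSpace W] {κ₀ : ℝ} (hκ₀ : 0 < κ₀) (hA : IsElliptic A κ₀) :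
    ∃ C : ℝ≥0, ∀ {U : Set (EuclideanSpace ℝ (Fin n))} {v : EuclideanSpace ℝ (Fin n) → W}
      {θ : EuclideanSpace ℝ (Fin n) → ℝ}, IsOpen U → ContDiffOn ℝ 2 v U → SolvesSystemOn A v U →
      ContDiff ℝ 1 θ → HasCompactSupport θ → tsupport θ ⊆ U → ∀ j,
      ∫⁻ x, ‖θ x • pd j v x‖ₑ ^ 2 ≤ C * ∫⁻ x, (‖fderiv ℝ θ x‖ₑ * ‖v x‖ₑ) ^ 2 := by
  set c := 4 / κ₀ * (2 * (∑ r, ∑ s, ‖A r s‖) ^ 2 / κ₀ + ∑ r, ∑ s, ‖A r s‖) + 2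
  have hc₀ : 0 ≤ c := by positivity
  refine ⟨c.toNNReal, fun {U v θ} hU hv hsol hθ hc hθU j => ?_⟩
  have hv₁ : ContDiffOn ℝ 1 v U := hv.of_le one_le_two
  have hint₁ := integrable_comp_pd_smul hU hv₁ hθ hc hθU (Φ := fun P T => ‖P j - T j‖ ^ 2)
    (by fun_prop) (by simp)
  have hint₂ := integrable_comp_pd_smul hU hv₁ hθ hc hθU (Φ := fun _ T => ‖T‖ ^ 2)
    (by fun_prop) (by simp)
  simp only [← smul_pd_eq_sub hU (hv₁.differentiableOn one_ne_zero)
    (hθ.differentiable one_ne_zero) hθU] at hint₁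
  calc ∫⁻ x, ‖θ x • pd j v x‖ₑ ^ 2
    _ = ENNReal.ofReal (∫ x, ‖θ x • pd j v x‖ ^ 2) := lintegral_enorm_sq_eq_ofReal hint₁
    _ ≤ ENNReal.ofReal (c * ∫ x, ‖fun r => pd r θ x • v x‖ ^ 2) :=
      ENNReal.ofReal_le_ofReal (integral_sq_norm_smul_pd_le hκ₀ hA hU hv hsol hθ hc hθU j)
    _ = c.toNNReal * ∫⁻ x, ‖fun r => pd r θ x • v x‖ₑ ^ 2 := by
      rw [ENNReal.ofReal_mul hc₀, lintegral_enorm_sq_eq_ofReal hint₂]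
      rfl
    _ ≤ c.toNNReal * ∫⁻ x, (‖fderiv ℝ θ x‖ₑ * ‖v x‖ₑ) ^ 2 := by
      gcongr with x
      rw [← enorm_norm (fderiv ℝ θ x), ← enorm_norm (v x), ← enorm_mul, enorm_le_iff_norm_le]
      exact (norm_pd_smul_le x).trans (le_abs_self _)

end Caccioppoli

section HalfSpaceCutoff

variable {n : ℕ}

/-- The open half-space where the `l`-th coordinate is positive. -/
def halfSpace (l : Fin n) : Set (EuclideanSpace ℝ (Fin n)) := {x | 0 < x l}

/-- The part of the closed ball of radius `R` about the origin in the half-space `x l > 0`. -/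
def halfBall (l : Fin n) (R : ℝ) : Set (EuclideanSpace ℝ (Fin n)) := closedBall 0 R ∩ halfSpace l

lemma isOpen_halfSpace (l : Fin n) : IsOpen (halfSpace l) :=
  isOpen_lt continuous_const (by fun_prop)

lemma measurableSet_halfBall (l : Fin n) (R : ℝ) : MeasurableSet (halfBall l R) :=
  measurableSet_closedBall.inter (isOpen_halfSpace l).measurableSet

lemma exists_abs_deriv_smoothTransition_le :
    ∃ c, ∀ t, |deriv smoothTransition t| ≤ (Set.Iic 1).indicator (fun _ => c) t := by
  have hright : ∀ t, 1 < t → deriv smoothTransition t = 0 := fun t ht => by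
    rw [EventuallyEq.deriv_eq (f := fun _ => 1) (eventually_of_mem (Ioi_mem_nhds ht) fun y hy =>
      smoothTransition.one_of_one_le (le_of_lt hy)), deriv_const]
  have hleft : ∀ t, t < 0 → deriv smoothTransition t = 0 := fun t ht => by
    rw [EventuallyEq.deriv_eq (f := fun _ => 0) (eventually_of_mem (Iio_mem_nhds ht) fun y hy =>
      smoothTransition.zero_of_nonpos (le_of_lt hy)), deriv_const]
  have hcont : Continuous (deriv smoothTransition) :=
    (smoothTransition.contDiff (n := 1)).continuous_deriv le_rfl
  have hsupp : HasCompactSupport (deriv smoothTransition) :=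
    HasCompactSupport.intro (isCompact_Icc (a := (0 : ℝ)) (b := 1)) fun t ht => by
      rcases not_and_or.1 ht with h | h
      exacts [hleft t (not_le.1 h), hright t (not_le.1 h)]
  obtain ⟨c, hc⟩ := hsupp.exists_bound_of_continuous hcont
  refine ⟨c, fun t => ?_⟩
  by_cases ht : t ≤ 1
  · simpa [Set.indicator_of_mem (Set.mem_Iic.2 ht)] using hc t
  · simp [ht, hright t (not_le.1 ht)]

/-- The radial factor of the cutoff, equal to one on the unit ball and supported in the ball of
radius two. -/
def radialBump (n : ℕ) : ContDiffBump (0 : EuclideanSpace ℝ (Fin n)) := ⟨1, 2, one_pos, one_lt_two⟩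

/-- A smooth cutoff for the half-space `x l > 0`, equal to one where `‖x‖ ≤ R` and `2 * ε ≤ x l`,
and supported where `‖x‖ ≤ 2 * R` and `ε ≤ x l`. -/
def halfSpaceCutoff (l : Fin n) (R ε : ℝ) (x : EuclideanSpace ℝ (Fin n)) : ℝ :=
  smoothTransition (ε⁻¹ * x l - 1) * radialBump n (R⁻¹ • x)

variable {l : Fin n} {R ε : ℝ}

lemma contDiff_halfSpaceCutoff (l : Fin n) (R ε : ℝ) : ContDiff ℝ 1 (halfSpaceCutoff l R ε) :=
  (smoothTransition.contDiff.comp ((contDiff_const.mul (contDiff_piLp_apply (p := 2))).sub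
    contDiff_const)).mul ((radialBump n).contDiff.comp (contDiff_const_smul _))

lemma tsupport_halfSpaceCutoff_subset (l : Fin n) (hR : 0 < R) (hε : 0 < ε) :
    tsupport (halfSpaceCutoff l R ε) ⊆ closedBall 0 (2 * R) ∩ {x | ε ≤ x l} := by
  refine closure_minimal (fun x hx => ?_)
    (isClosed_closedBall.inter (isClosed_le continuous_const (by fun_prop)))
  obtain ⟨htrans, hbump⟩ := mul_ne_zero_iff.1 hx
  constructor
  · have hx2 : ‖R⁻¹ • x‖ < 2 := by
      by_contra! h
      exact hbump ((radialBump n).zero_of_le_dist (by simpa [radialBump] using h))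
    rw [norm_smul, norm_inv, norm_of_nonneg hR.le, inv_mul_lt_iff₀ hR] at hx2
    simpa [mul_comm] using hx2.le
  · have hxl : 0 < ε⁻¹ * x l - 1 := not_le.1 fun h => htrans (smoothTransition.zero_of_nonpos h)
    exact ((lt_inv_mul_iff₀ hε).1 (sub_pos.1 hxl)).le.trans_eq' (mul_one ε)

lemma halfSpaceCutoff_eq_one (hR : 0 < R) (hε : 0 < ε) {x : EuclideanSpace ℝ (Fin n)}
    (hx : ‖x‖ ≤ R) (hxl : 2 * ε ≤ x l) : halfSpaceCutoff l R ε x = 1 := by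
  have htrans : 2 ≤ ε⁻¹ * x l := (le_inv_mul_iff₀ hε).2 (by linarith)
  have hbump : ‖R⁻¹ • x‖ ≤ 1 := by
    rw [norm_smul, norm_inv, norm_of_nonneg hR.le, inv_mul_le_iff₀ hR]
    linarith
  rw [halfSpaceCutoff, smoothTransition.one_of_one_le (by linarith),
    (radialBump n).one_of_mem_closedBall (by simpa [radialBump] using hbump), one_mul]

lemma hasCompactSupport_halfSpaceCutoff (l : Fin n) (hR : 0 < R) (hε : 0 < ε) :
    HasCompactSupport (halfSpaceCutoff l R ε) :=
  (isCompact_closedBall _ _).of_isClosed_subset (isClosed_tsupport _)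
    ((tsupport_halfSpaceCutoff_subset l hR hε).trans Set.inter_subset_left)

lemma exists_norm_fderiv_smoothTransition_coord_le (l : Fin n) :
    ∃ C : ℝ≥0, ∀ ε, 0 < ε → ∀ x : EuclideanSpace ℝ (Fin n),
      ‖fderiv ℝ (fun y : EuclideanSpace ℝ (Fin n) => smoothTransition (ε⁻¹ * y l - 1)) x‖ ≤
        C * {x : EuclideanSpace ℝ (Fin n) | x l ≤ 2 * ε}.indicator (fun _ => ε⁻¹) x := by
  obtain ⟨c, hc⟩ := exists_abs_deriv_smoothTransition_le
  set L : EuclideanSpace ℝ (Fin n) →L[ℝ] ℝ := EuclideanSpace.proj l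
  refine ⟨c.toNNReal * ‖L‖₊, fun ε hε x => ?_⟩
  have hfd : HasFDerivAt (fun y : EuclideanSpace ℝ (Fin n) => smoothTransition (ε⁻¹ * y l - 1))
      (deriv smoothTransition (ε⁻¹ * x l - 1) • ε⁻¹ • L) x :=
    ((smoothTransition.contDiff (n := 1)).differentiable one_ne_zero _).hasDerivAt.comp_hasFDerivAt
      x ((L.hasFDerivAt.const_mul ε⁻¹).sub_const 1)
  have hslab : ε⁻¹ * x l - 1 ≤ 1 ↔ x l ≤ 2 * ε := by
    rw [sub_le_iff_le_add, inv_mul_le_iff₀ hε, one_add_one_eq_two, mul_comm]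
  rw [hfd.fderiv, norm_smul, norm_smul, norm_of_nonneg (inv_pos.2 hε).le]
  have hderiv := hc (ε⁻¹ * x l - 1)
  by_cases hx : x l ≤ 2 * ε
  · rw [Set.indicator_of_mem (Set.mem_Iic.2 (hslab.2 hx))] at hderiv
    simp only [Set.indicator, Set.mem_ofPred_eq, if_pos hx]
    rw [NNReal.coe_mul, coe_nnnorm, mul_assoc, mul_comm ‖L‖]
    gcongr
    exact hderiv.trans (le_max_left c 0)
  · rw [Set.indicator_of_notMem fun h => hx (hslab.1 (Set.mem_Iic.1 h))] at hderiv
    simp [abs_nonpos_iff.1 hderiv, hx]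

/-- Away from the slab `x l ≤ 2 * ε` only the radial factor varies. -/
lemma exists_norm_fderiv_halfSpaceCutoff_le (l : Fin n) : ∃ C : ℝ≥0, ∀ R ε, 0 < R → 0 < ε → ∀ x,
    ‖fderiv ℝ (halfSpaceCutoff l R ε) x‖ ≤
      C * (R⁻¹ + {x : EuclideanSpace ℝ (Fin n) | x l ≤ 2 * ε}.indicator (fun _ => ε⁻¹) x) := by
  obtain ⟨c₁, hc₁⟩ := exists_norm_fderiv_smoothTransition_coord_le l
  obtain ⟨c₂, hc₂⟩ := ((radialBump n).hasCompactSupport.fderiv ℝ).exists_bound_of_continuous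
    ((radialBump n).contDiff.continuous_fderiv one_ne_zero)
  refine ⟨c₁ + c₂.toNNReal, fun R ε hR hε x => ?_⟩
  set τ : EuclideanSpace ℝ (Fin n) → ℝ := fun y => smoothTransition (ε⁻¹ * y l - 1)
  set β : EuclideanSpace ℝ (Fin n) → ℝ := fun y => radialBump n (R⁻¹ • y)
  have hτ : DifferentiableAt ℝ τ x :=
    ((smoothTransition.contDiff (n := 1)).comp ((contDiff_const.mul
      (contDiff_piLp_apply (p := 2))).sub contDiff_const)).differentiable one_ne_zero x
  have hβ : DifferentiableAt ℝ β x :=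
    ((radialBump n).contDiff.comp (contDiff_const_smul _)).differentiable one_ne_zero x
  have hτ₁ : ‖τ x‖ ≤ 1 := by
    simpa [τ, abs_of_nonneg (smoothTransition.nonneg _)] using smoothTransition.le_one _
  have hβ₁ : ‖β x‖ ≤ 1 := by
    simpa [β, abs_of_nonneg (radialBump n).nonneg] using (radialBump n).le_one
  have hβ' : ‖fderiv ℝ β x‖ ≤ c₂.toNNReal * R⁻¹ := by
    rw [fderiv_comp_smul, norm_smul, norm_of_nonneg (inv_pos.2 hR).le, mul_comm]
    gcongr
    exact (hc₂ _).trans (le_max_left c₂ 0)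
  have hslab : 0 ≤ {x : EuclideanSpace ℝ (Fin n) | x l ≤ 2 * ε}.indicator (fun _ => ε⁻¹) x :=
    Set.indicator_nonneg (fun _ _ => (inv_pos.2 hε).le) x
  calc ‖fderiv ℝ (fun y => τ y * β y) x‖
    _ ≤ ‖τ x‖ * ‖fderiv ℝ β x‖ + ‖β x‖ * ‖fderiv ℝ τ x‖ := by
      rw [fderiv_fun_mul hτ hβ, ← norm_smul, ← norm_smul]
      exact norm_add_le _ _
    _ ≤ 1 * (c₂.toNNReal * R⁻¹) + 1 * (c₁ *
        {x : EuclideanSpace ℝ (Fin n) | x l ≤ 2 * ε}.indicator (fun _ => ε⁻¹) x) := by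
      gcongr
      exact hc₁ ε hε x
    _ ≤ _ := by
      rw [NNReal.coe_add, add_mul, mul_add, mul_add]
      have hR' := (inv_pos.2 hR).le
      nlinarith [mul_nonneg c₁.2 hR', mul_nonneg c₂.toNNReal.2 hslab]

end HalfSpaceCutoff

section HalfBallCaccioppoli

variable {n : ℕ} {W : Type*} [NormedAddCommGroup W] {l : Fin n}
  {v : EuclideanSpace ℝ (Fin n) → W} {D R : ℝ}

/-- Linear decay at the boundary compensates the factor `ε⁻¹` on the slab `x l ≤ 2 * ε`. -/
lemma exists_norm_fderiv_halfSpaceCutoff_mul_norm_le (l : Fin n) : ∃ C : ℝ≥0,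
    ∀ {v : EuclideanSpace ℝ (Fin n) → W} {D R ε : ℝ}, 0 < R → 0 < ε → ∀ x ∈ halfSpace l,
      ‖v x‖ ≤ D * x l → ‖fderiv ℝ (halfSpaceCutoff l R ε) x‖ * ‖v x‖ ≤
        C * (R⁻¹ * ‖v x‖ + {x | x l ≤ 2 * ε}.indicator (fun _ => 2 * D) x) := by
  obtain ⟨C, hC⟩ := exists_norm_fderiv_halfSpaceCutoff_le l
  refine ⟨C, fun {v D R ε} hR hε x hx hvx => ?_⟩
  have hD : 0 ≤ D := nonneg_of_mul_nonneg_left ((norm_nonneg _).trans hvx) hx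
  have hslab : {x | x l ≤ 2 * ε}.indicator (fun _ => ε⁻¹) x * ‖v x‖ ≤
      {x | x l ≤ 2 * ε}.indicator (fun _ => 2 * D) x := by
    by_cases hxε : x l ≤ 2 * ε
    · simp only [Set.indicator, Set.mem_ofPred_eq, if_pos hxε]
      rw [inv_mul_le_iff₀ hε]
      nlinarith
    · simp [hxε]
  calc ‖fderiv ℝ (halfSpaceCutoff l R ε) x‖ * ‖v x‖
    _ ≤ C * (R⁻¹ + {x | x l ≤ 2 * ε}.indicator (fun _ => ε⁻¹) x) * ‖v x‖ := by
      gcongr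
      exact hC R ε hR hε x
    _ ≤ _ := by
      rw [mul_assoc, add_mul]
      gcongr

lemma tendsto_lintegral_halfBall_add_slab (hv : ContinuousOn v (halfSpace l))
    (hD : ∀ x ∈ halfSpace l, ‖v x‖ ≤ D * x l) (c : ℝ) :
    Tendsto (fun m : ℕ => ∫⁻ x in halfBall l R, ENNReal.ofReal
      (‖v x‖ + {x | x l ≤ 2 * (1 / (m + 1 : ℝ))}.indicator (fun _ => c) x) ^ 2) atTop
      (𝓝 (∫⁻ x in halfBall l R, ‖v x‖ₑ ^ 2)) := by
  have hball : volume (halfBall l R) ≠ ∞ :=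
    ((measure_mono Set.inter_subset_left).trans_lt measure_closedBall_lt_top).ne
  refine tendsto_lintegral_of_dominated_convergence'
    (fun _ => ENNReal.ofReal (D * R + |c|) ^ 2) (fun m => ?_) (fun m => ?_) ?_ ?_
  · have hslab : MeasurableSet {x : EuclideanSpace ℝ (Fin n) | x l ≤ 2 * (1 / (m + 1 : ℝ))} :=
      (isClosed_le (by fun_prop) continuous_const).measurableSet
    exact ((((hv.norm.mono Set.inter_subset_right).aemeasurable (measurableSet_halfBall l R)).add
      (measurable_const.indicator hslab).aemeasurable).ennreal_ofReal).pow_const 2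
  · refine (ae_restrict_mem (measurableSet_halfBall l R)).mono fun x hx => ?_
    have hxR : x l ≤ R :=
      (le_abs_self _).trans ((PiLp.norm_apply_le x l).trans (mem_closedBall_zero_iff.1 hx.1))
    have hD₀ : 0 ≤ D := nonneg_of_mul_nonneg_left ((norm_nonneg _).trans (hD x hx.2)) hx.2
    exact pow_le_pow_left₀ zero_le (ENNReal.ofReal_le_ofReal (add_le_add
      ((hD x hx.2).trans (by gcongr))
      ((le_abs_self _).trans (norm_indicator_le_norm_self (fun _ => c) x)))) 2
  · simpa using ENNReal.mul_ne_top (by finiteness) hball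
  · refine (ae_restrict_mem (measurableSet_halfBall l R)).mono fun x hx => ?_
    refine tendsto_const_nhds.congr' ?_
    filter_upwards [(tendsto_one_div_add_atTop_nhds_zero_nat (𝕜 := ℝ)).eventually_lt_const
      (half_pos hx.2)] with m hm
    have hxm : ¬ x l ≤ 2 * (1 / (m + 1 : ℝ)) := by
      push Not
      linarith
    simp only [Set.indicator, Set.mem_ofPred_eq, if_neg hxm, add_zero, ofReal_norm]

variable [InnerProductSpace ℂ W] {A : Fin n → Fin n → W →L[ℂ] W} [CompleteSpace W]

lemma exists_lintegral_halfSpaceCutoff_smul_pd_le {κ₀ : ℝ} (hκ₀ : 0 < κ₀) (hA : IsElliptic A κ₀)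
    (l : Fin n) : ∃ C : ℝ≥0, ∀ {v : EuclideanSpace ℝ (Fin n) → W} {D R ε : ℝ},
      ContDiffOn ℝ 2 v (halfSpace l) → SolvesSystemOn A v (halfSpace l) →
      (∀ x ∈ halfSpace l, ‖v x‖ ≤ D * x l) → 0 < R → 0 < ε → ∀ j,
      ∫⁻ x, ‖halfSpaceCutoff l R ε x • pd j v x‖ₑ ^ 2 ≤
        C * ∫⁻ x in halfBall l (2 * R), ENNReal.ofReal
          (R⁻¹ * ‖v x‖ + {x | x l ≤ 2 * ε}.indicator (fun _ => 2 * D) x) ^ 2 := by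
  obtain ⟨C₁, hC₁⟩ := caccioppoli_inequality hκ₀ hA
  obtain ⟨C₂, hC₂⟩ := exists_norm_fderiv_halfSpaceCutoff_mul_norm_le (W := W) l
  refine ⟨C₁ * C₂ ^ 2, fun {v D R ε} hv hsol hD hR hε j => ?_⟩
  have hsupp : tsupport (halfSpaceCutoff l R ε) ⊆ halfBall l (2 * R) :=
    (tsupport_halfSpaceCutoff_subset l hR hε).trans
      (Set.inter_subset_inter_right _ fun x hx => hε.trans_le hx)
  have hpoint : ∀ x ∈ halfBall l (2 * R),
      (‖fderiv ℝ (halfSpaceCutoff l R ε) x‖ₑ * ‖v x‖ₑ) ^ 2 ≤ (C₂ : ℝ≥0∞) ^ 2 * ENNReal.ofReal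
        (R⁻¹ * ‖v x‖ + {x | x l ≤ 2 * ε}.indicator (fun _ => 2 * D) x) ^ 2 := fun x hx => by
    rw [← mul_pow, ← ENNReal.ofReal_coe_nnreal (p := C₂), ← ENNReal.ofReal_mul C₂.coe_nonneg,
      ← ofReal_norm, ← ofReal_norm, ← ENNReal.ofReal_mul (norm_nonneg _)]
    exact pow_le_pow_left₀ zero_le (ENNReal.ofReal_le_ofReal (hC₂ hR hε x hx.2 (hD x hx.2))) 2
  calc ∫⁻ x, ‖halfSpaceCutoff l R ε x • pd j v x‖ₑ ^ 2
    _ ≤ C₁ * ∫⁻ x, (‖fderiv ℝ (halfSpaceCutoff l R ε) x‖ₑ * ‖v x‖ₑ) ^ 2 :=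
      hC₁ (isOpen_halfSpace l) hv hsol (contDiff_halfSpaceCutoff l R ε)
        (hasCompactSupport_halfSpaceCutoff l hR hε) (hsupp.trans Set.inter_subset_right) j
    _ = C₁ * ∫⁻ x in halfBall l (2 * R),
        (‖fderiv ℝ (halfSpaceCutoff l R ε) x‖ₑ * ‖v x‖ₑ) ^ 2 := by
      rw [setLIntegral_eq_of_support_subset]
      refine fun x hx => hsupp (by_contra fun h => hx ?_)
      have hfderiv : ‖fderiv ℝ (halfSpaceCutoff l R ε) x‖ₑ = 0 := by
        rw [← ofReal_norm, fderiv_of_notMem_tsupport ℝ h, norm_zero, ENNReal.ofReal_zero]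
      simp [hfderiv]
    _ ≤ _ := by
      refine (mul_le_mul_right
        (setLIntegral_mono' (measurableSet_halfBall l _) hpoint) _).trans_eq ?_
      rw [lintegral_const_mul' _ _ (by finiteness), ENNReal.coe_mul, ENNReal.coe_pow, mul_assoc]

/-- The cutoff near the boundary costs nothing in the limit because `v` vanishes linearly there. -/
lemma caccioppoli_inequality_halfBall {κ₀ : ℝ} (hκ₀ : 0 < κ₀) (hA : IsElliptic A κ₀) (l : Fin n) :
    ∃ C : ℝ≥0, ∀ {v : EuclideanSpace ℝ (Fin n) → W} {D R : ℝ},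
      ContDiffOn ℝ 2 v (halfSpace l) → SolvesSystemOn A v (halfSpace l) →
      (∀ x ∈ halfSpace l, ‖v x‖ ≤ D * x l) → 0 < R → ∀ j,
      ∫⁻ x in halfBall l R, ‖pd j v x‖ₑ ^ 2 ≤
        C * (ENNReal.ofReal R⁻¹ ^ 2 * ∫⁻ x in halfBall l (2 * R), ‖v x‖ₑ ^ 2) := by
  obtain ⟨C, hC⟩ := exists_lintegral_halfSpaceCutoff_smul_pd_le hκ₀ hA l
  refine ⟨C, fun {v D R} hv hsol hD hR j => ?_⟩
  set ε : ℕ → ℝ := fun m => 1 / (m + 1 : ℝ)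
  have hε : ∀ m, 0 < ε m := fun m => by positivity
  have hcut : ∀ x ∈ halfBall l R, Tendsto (fun m => ‖halfSpaceCutoff l R (ε m) x • pd j v x‖ₑ ^ 2)
      atTop (𝓝 (‖pd j v x‖ₑ ^ 2)) := fun x hx => by
    refine tendsto_const_nhds.congr' ?_
    filter_upwards [(tendsto_one_div_add_atTop_nhds_zero_nat (𝕜 := ℝ)).eventually_lt_const
      (half_pos hx.2)] with m hm
    rw [halfSpaceCutoff_eq_one hR (hε m) (mem_closedBall_zero_iff.1 hx.1)
      (by simp only [ε]; linarith), one_smul]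
  have hmeas : ∀ m, AEMeasurable (fun x => ‖halfSpaceCutoff l R (ε m) x • pd j v x‖ₑ ^ 2)
      (volume.restrict (halfBall l R)) := fun m =>
    (((contDiff_halfSpaceCutoff l R (ε m)).continuous.continuousOn.smul
      (contDiffOn_pd (isOpen_halfSpace l) hv (k := 1) (by norm_num) j).continuousOn).mono
        Set.inter_subset_right).enorm.aemeasurable (measurableSet_halfBall l R) |>.pow_const 2
  have hdecay : ∀ x ∈ halfSpace l, ‖R⁻¹ • v x‖ ≤ R⁻¹ * D * x l := fun x hx => by
    rw [norm_smul, norm_of_nonneg (inv_pos.2 hR).le, mul_assoc]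
    gcongr
    exact hD x hx
  have hlim := ENNReal.Tendsto.const_mul (a := (C : ℝ≥0∞)) (tendsto_lintegral_halfBall_add_slab
    (R := 2 * R) (v := fun x => R⁻¹ • v x) (continuousOn_const.smul hv.continuousOn) hdecay (2 * D))
    (Or.inr ENNReal.coe_ne_top)
  simp only [norm_smul, norm_of_nonneg (inv_pos.2 hR).le] at hlim
  calc ∫⁻ x in halfBall l R, ‖pd j v x‖ₑ ^ 2
    _ = ∫⁻ x in halfBall l R,
        liminf (fun m => ‖halfSpaceCutoff l R (ε m) x • pd j v x‖ₑ ^ 2) atTop :=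
      setLIntegral_congr_fun (measurableSet_halfBall l R) fun x hx => (hcut x hx).liminf_eq.symm
    _ ≤ liminf (fun m => ∫⁻ x in halfBall l R,
        ‖halfSpaceCutoff l R (ε m) x • pd j v x‖ₑ ^ 2) atTop := lintegral_liminf_le' hmeas
    _ ≤ C * ∫⁻ x in halfBall l (2 * R), ‖R⁻¹ • v x‖ₑ ^ 2 :=
      (liminf_le_liminf (.of_forall fun m => (setLIntegral_le_lintegral _ _).trans
        (hC hv hsol hD hR (hε m) j))).trans_eq hlim.liminf_eq
    _ = _ := by
      simp only [enorm_smul, mul_pow]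
      rw [lintegral_const_mul' _ _ (by finiteness), Real.enorm_of_nonneg (inv_pos.2 hR).le]

end HalfBallCaccioppoli

section HalfSpaceLiouville

variable {n : ℕ} {F : Type*} [NormedAddCommGroup F] {i l : Fin n}

lemma add_smul_single_mem_halfSpace {x : EuclideanSpace ℝ (Fin n)} (hil : i ≠ l)
    (hx : x ∈ halfSpace l) (s : ℝ) : x + s • EuclideanSpace.single i 1 ∈ halfSpace l := by
  simpa [halfSpace, PiLp.single_apply, hil.symm] using hx

lemma eqOn_zero_of_lintegral_halfBall_eq_zero {v : EuclideanSpace ℝ (Fin n) → F}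
    (hv : ContinuousOn v (halfSpace l))
    (h₀ : ∀ R, ∫⁻ x in halfBall l R, ‖v x‖ₑ ^ 2 = 0) : Set.EqOn v 0 (halfSpace l) := by
  intro x hx
  have hae : ∀ᵐ y ∂volume.restrict (halfBall l (‖x‖ + 1)), v y = 0 := by
    have hmeas : AEMeasurable (fun y => ‖v y‖ₑ ^ 2) (volume.restrict (halfBall l (‖x‖ + 1))) :=
      ((hv.mono Set.inter_subset_right).enorm.aemeasurable
        (measurableSet_halfBall l (‖x‖ + 1))).pow_const 2
    filter_upwards [(lintegral_eq_zero_iff' hmeas).1 (h₀ (‖x‖ + 1))] with y hy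
    simpa using hy
  exact Measure.eqOn_open_of_ae_eq (ae_restrict_of_ae_restrict_of_subset
    (Set.inter_subset_inter_left _ ball_subset_closedBall) hae)
    (isOpen_ball.inter (isOpen_halfSpace l)) (hv.mono Set.inter_subset_right) continuousOn_const
    ⟨by simp, hx⟩

lemma exists_lintegral_halfBall_le_of_norm_le {v : EuclideanSpace ℝ (Fin n) → F} {B : ℝ}
    (hB : ∀ x ∈ halfSpace l, ‖v x‖ ≤ B) :
    ∃ c : ℝ≥0, ∀ R, 0 < R → ∫⁻ x in halfBall l R, ‖v x‖ₑ ^ 2 ≤ c * ENNReal.ofReal (R ^ n) := by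
  have hball : volume (ball (0 : EuclideanSpace ℝ (Fin n)) 1) ≠ ∞ := measure_ball_lt_top.ne
  refine ⟨B.toNNReal ^ 2 * (volume (ball (0 : EuclideanSpace ℝ (Fin n)) 1)).toNNReal,
    fun R hR => ?_⟩
  calc ∫⁻ x in halfBall l R, ‖v x‖ₑ ^ 2
    _ ≤ ∫⁻ _ in halfBall l R, ENNReal.ofReal B ^ 2 :=
      setLIntegral_mono' (measurableSet_halfBall l R) fun x hx => by
        rw [← ofReal_norm]
        exact pow_le_pow_left₀ zero_le (ENNReal.ofReal_le_ofReal (hB x hx.2)) 2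
    _ ≤ ENNReal.ofReal B ^ 2 * volume (closedBall (0 : EuclideanSpace ℝ (Fin n)) R) := by
      rw [setLIntegral_const]
      exact mul_le_mul_right (measure_mono Set.inter_subset_left) _
    _ = _ := by
      rw [Measure.addHaar_closedBall _ _ hR.le, finrank_euclideanSpace_fin, ENNReal.coe_mul,
        ENNReal.coe_pow, ENNReal.coe_toNNReal hball, ENNReal.ofReal]
      ring

lemma exists_le_mul_of_le_mul_comp_two_mul {J : ℕ → ℝ → ℝ≥0∞} {C c : ℝ≥0}
    (hJ₀ : ∀ R, 0 < R → J 0 R ≤ c * ENNReal.ofReal (R ^ n))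
    (hJ : ∀ k R, 0 < R → J (k + 1) R ≤ C * (ENNReal.ofReal R⁻¹ ^ 2 * J k (2 * R))) (k : ℕ) :
    ∃ c' : ℝ≥0, ∀ R, 0 < R → J k R ≤ c' * ENNReal.ofReal (R ^ n * R⁻¹ ^ (2 * k)) := by
  induction k with
  | zero => exact ⟨c, by simpa using hJ₀⟩
  | succ k ih =>
    obtain ⟨c', hc'⟩ := ih
    refine ⟨C * c' * (2 ^ n * 2⁻¹ ^ (2 * k)), fun R hR => (hJ k R hR).trans ?_⟩
    refine (mul_le_mul_right (mul_le_mul_right (hc' (2 * R) (by positivity)) _) _).trans_eq ?_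
    simp only [← ENNReal.ofReal_coe_nnreal]
    rw [← ENNReal.ofReal_pow (by positivity), ← ENNReal.ofReal_mul (by positivity),
      ← ENNReal.ofReal_mul (by positivity), ← ENNReal.ofReal_mul (by positivity),
      ← ENNReal.ofReal_mul (by positivity)]
    congr 1
    push_cast
    rw [mul_inv]
    ring

variable [NormedSpace ℝ F]

lemma hasDerivAt_comp_add_smul_single {v : EuclideanSpace ℝ (Fin n) → F}
    {x : EuclideanSpace ℝ (Fin n)} {s : ℝ}
    (hv : DifferentiableAt ℝ v (x + s • EuclideanSpace.single i 1)) :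
    HasDerivAt (fun s : ℝ => v (x + s • EuclideanSpace.single i 1))
      (pd i v (x + s • EuclideanSpace.single i 1)) s := by
  refine hv.hasFDerivAt.comp_hasDerivAt s ?_
  simpa using ((hasDerivAt_id s).smul_const (EuclideanSpace.single i (1 : ℝ))).const_add x

lemma eq_zero_of_hasDerivAt_const_of_norm_le {f : ℝ → F} {c : F} {B : ℝ}
    (hf : ∀ s, HasDerivAt f c s) (hB : ∀ s, ‖f s‖ ≤ B) : c = 0 := by
  have haffine : ∀ s, f s - s • c = f 0 := fun s => by
    have hderiv : ∀ s, HasDerivAt (fun s => f s - s • c) 0 s := fun s => by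
      simpa using (hf s).fun_sub ((hasDerivAt_id s).smul_const c)
    simpa using is_const_of_deriv_eq_zero (fun s => (hderiv s).differentiableAt)
      (fun s => (hderiv s).deriv) s 0
  have hgrowth : ∀ s : ℝ, |s| * ‖c‖ ≤ 2 * B := fun s => by
    rw [← Real.norm_eq_abs, ← norm_smul, ← sub_sub_cancel (f s) (s • c), haffine]
    linarith [norm_sub_le (f s) (f 0), hB s, hB 0]
  by_contra hc
  have hB₀ : 0 ≤ B := (norm_nonneg _).trans (hB 0)
  have hs := hgrowth ((2 * B + 1) / ‖c‖)
  rw [abs_of_nonneg (by positivity), div_mul_cancel₀ _ (norm_ne_zero_iff.2 hc)] at hs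
  linarith

lemma comp_add_smul_single_eq_of_pd_eqOn_zero {v : EuclideanSpace ℝ (Fin n) → F} (hil : i ≠ l)
    (hv : DifferentiableOn ℝ v (halfSpace l)) (h₀ : Set.EqOn (pd i v) 0 (halfSpace l))
    {x : EuclideanSpace ℝ (Fin n)} (hx : x ∈ halfSpace l) (s : ℝ) :
    v (x + s • EuclideanSpace.single i 1) = v x := by
  have hline := add_smul_single_mem_halfSpace hil hx
  have hderiv := fun s => hasDerivAt_comp_add_smul_single
    (hv.differentiableAt ((isOpen_halfSpace l).mem_nhds (hline s)))
  simpa using is_const_of_deriv_eq_zero (fun s => (hderiv s).differentiableAt)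
    (fun s => (hderiv s).deriv.trans (h₀ (hline s))) s 0

lemma pd_eqOn_zero_of_pd_pd_eqOn_zero {v : EuclideanSpace ℝ (Fin n) → F} {B : ℝ} (hil : i ≠ l)
    (hv : ContDiffOn ℝ 2 v (halfSpace l)) (hB : ∀ x ∈ halfSpace l, ‖v x‖ ≤ B)
    (h₀ : Set.EqOn (pd i (pd i v)) 0 (halfSpace l)) : Set.EqOn (pd i v) 0 (halfSpace l) := by
  intro x hx
  have hU := isOpen_halfSpace l
  have hline := add_smul_single_mem_halfSpace hil hx
  have hpd : DifferentiableOn ℝ (pd i v) (halfSpace l) :=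
    (contDiffOn_pd hU hv (k := 1) (by norm_num) i).differentiableOn one_ne_zero
  refine eq_zero_of_hasDerivAt_const_of_norm_le
    (f := fun s : ℝ => v (x + s • EuclideanSpace.single i 1)) (fun s => ?_) fun s => hB _ (hline s)
  rw [← comp_add_smul_single_eq_of_pd_eqOn_zero hil hpd h₀ hx s]
  exact hasDerivAt_comp_add_smul_single
    ((hv.differentiableOn two_ne_zero).differentiableAt (hU.mem_nhds (hline s)))

lemma pd_eqOn_zero_of_iterated_pd_eqOn_zero {v : ℕ → EuclideanSpace ℝ (Fin n) → F} (hil : i ≠ l)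
    (hv : ∀ k, ContDiffOn ℝ 2 (v k) (halfSpace l))
    (hB : ∀ k, ∃ B, ∀ x ∈ halfSpace l, ‖v k x‖ ≤ B)
    (hpd : ∀ k, Set.EqOn (pd i (v k)) (v (k + 1)) (halfSpace l)) {k : ℕ}
    (hk : Set.EqOn (v (k + 1)) 0 (halfSpace l)) : Set.EqOn (pd i (v 0)) 0 (halfSpace l) := by
  induction k with
  | zero => exact (hpd 0).trans hk
  | succ k ih =>
    obtain ⟨B, hB⟩ := hB k
    refine ih ((hpd k).symm.trans (pd_eqOn_zero_of_pd_pd_eqOn_zero hil (hv k) hB ?_))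
    exact (pd_eqOn (isOpen_halfSpace l) (hpd k) i).trans ((hpd (k + 1)).trans hk)

variable {W : Type*} [NormedAddCommGroup W] [InnerProductSpace ℂ W] [CompleteSpace W]
  {A : Fin n → Fin n → W →L[ℂ] W}

/-- Each tangential derivative gains a factor `R⁻²` in Caccioppoli's inequality, against the initial
growth `R ^ n`. -/
lemma pd_eqOn_zero_of_linear_decay {κ₀ : ℝ} (hκ₀ : 0 < κ₀) (hA : IsElliptic A κ₀) (hil : i ≠ l)
    {v : ℕ → EuclideanSpace ℝ (Fin n) → W} (hv : ∀ k, ContDiffOn ℝ 2 (v k) (halfSpace l))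
    (hsol : ∀ k, SolvesSystemOn A (v k) (halfSpace l))
    (hD : ∀ k, ∃ D, ∀ x ∈ halfSpace l, ‖v k x‖ ≤ D * x l)
    (hB : ∀ k, ∃ B, ∀ x ∈ halfSpace l, ‖v k x‖ ≤ B)
    (hpd : ∀ k, Set.EqOn (pd i (v k)) (v (k + 1)) (halfSpace l)) :
    Set.EqOn (pd i (v 0)) 0 (halfSpace l) := by
  obtain ⟨m, rfl⟩ : ∃ m, n = m + 1 := ⟨n - 1, by have := l.pos; omega⟩
  suffices hvanish : ∀ R, ∫⁻ x in halfBall l R, ‖v (m + 1) x‖ₑ ^ 2 = 0 from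
    pd_eqOn_zero_of_iterated_pd_eqOn_zero hil hv hB hpd
      (eqOn_zero_of_lintegral_halfBall_eq_zero (hv (m + 1)).continuousOn hvanish)
  obtain ⟨C, hC⟩ := caccioppoli_inequality_halfBall hκ₀ hA l
  obtain ⟨B, hB₀⟩ := hB 0
  obtain ⟨c₀, hc₀⟩ := exists_lintegral_halfBall_le_of_norm_le hB₀
  obtain ⟨c, hc⟩ := exists_le_mul_of_le_mul_comp_two_mul (C := C)
    (J := fun k R => ∫⁻ x in halfBall l R, ‖v k x‖ₑ ^ 2) hc₀ (fun k R hR => by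
      obtain ⟨D, hD⟩ := hD k
      refine (setLIntegral_congr_fun (measurableSet_halfBall l R) fun x hx => ?_).trans_le
        (hC (hv k) (hsol k) hD hR i)
      rw [hpd k hx.2]) (m + 1)
  intro R
  have hlim : Tendsto (fun S : ℝ => (c : ℝ≥0∞) * ENNReal.ofReal (S⁻¹ ^ (m + 1))) atTop (𝓝 0) := by
    simpa using ENNReal.Tendsto.const_mul
      (ENNReal.tendsto_ofReal (tendsto_inv_atTop_zero.pow (m + 1))) (Or.inr ENNReal.coe_ne_top)
  refine le_antisymm (ge_of_tendsto hlim ?_) zero_le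
  filter_upwards [eventually_gt_atTop 0, eventually_ge_atTop R] with S hS hRS
  refine (lintegral_mono_set (Set.inter_subset_inter_left _
    (closedBall_subset_closedBall hRS))).trans ((hc S hS).trans_eq ?_)
  rw [two_mul, pow_add _ (m + 1) (m + 1), ← mul_assoc, ← mul_pow, mul_inv_cancel₀ hS.ne',
    one_pow, one_mul]

end HalfSpaceLiouville

section LinearDecay

variable {n : ℕ} {F : Type*} [NormedAddCommGroup F] [NormedSpace ℝ F]

lemma sum_sum_eq_add_sum_erase {ι N : Type*} [Fintype ι] [DecidableEq ι] [AddCommGroup N] (l : ι)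
    (f : ι → ι → N) : ∑ r, ∑ s, f r s = f l l + ∑ r ∈ Finset.univ.erase l, (f r l + f l r) +
      ∑ r ∈ Finset.univ.erase l, ∑ s ∈ Finset.univ.erase l, f r s := by
  have hrow : ∀ r, ∑ s, f r s = f r l + ∑ s ∈ Finset.univ.erase l, f r s := fun r =>
    (Finset.add_sum_erase Finset.univ (f r) (Finset.mem_univ l)).symm
  rw [← Finset.add_sum_erase Finset.univ _ (Finset.mem_univ l)]
  simp only [hrow, Finset.sum_add_distrib]
  abel

lemma norm_le_of_norm_deriv_sub_le {f f' : ℝ → F} {c : F} {B K : ℝ}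
    (hf : ∀ s ∈ Set.Icc (0 : ℝ) 1, HasDerivAt f (f' s) s) (hB : ∀ s ∈ Set.Icc (0 : ℝ) 1, ‖f s‖ ≤ B)
    (hK : ∀ s ∈ Set.Icc (0 : ℝ) 1, ‖f' s - c‖ ≤ K) : ‖c‖ ≤ 2 * B + K := by
  have hmem₀ : (0 : ℝ) ∈ Set.Icc (0 : ℝ) 1 := Set.left_mem_Icc.2 zero_le_one
  have hmem₁ : (1 : ℝ) ∈ Set.Icc (0 : ℝ) 1 := Set.right_mem_Icc.2 zero_le_one
  have hmean := Convex.norm_image_sub_le_of_norm_hasDerivWithin_le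
    (f := fun s => f s - s • c) (f' := fun s => f' s - c) (fun s hs =>
      (by simpa using (hf s hs).fun_sub ((hasDerivAt_id s).smul_const c) :
        HasDerivAt (fun s => f s - s • c) (f' s - c) s).hasDerivWithinAt)
    hK (convex_Icc 0 1) hmem₀ hmem₁
  simp only [one_smul, zero_smul, sub_zero, norm_one, mul_one] at hmean
  calc ‖c‖
    _ = ‖f 1 - f 0 - (f 1 - c - f 0)‖ := by congr 1; abel
    _ ≤ ‖f 1‖ + ‖f 0‖ + ‖f 1 - c - f 0‖ :=
      (norm_sub_le _ _).trans (add_le_add_left (norm_sub_le _ _) _)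
    _ ≤ 2 * B + K := by linarith [hB 0 hmem₀, hB 1 hmem₁]

lemma norm_le_mul_of_norm_pd_le {l : Fin n} {v : EuclideanSpace ℝ (Fin n) → F} {K : ℝ}
    (hv : DifferentiableOn ℝ v (halfSpace l)) (hK : ∀ x ∈ halfSpace l, ‖pd l v x‖ ≤ K)
    (hlim : ∀ x, x l = 0 → Tendsto (fun s : ℝ => v (x + s • EuclideanSpace.single l 1)) (𝓝[>] 0)
      (𝓝 0)) {x : EuclideanSpace ℝ (Fin n)} (hx : x ∈ halfSpace l) : ‖v x‖ ≤ K * x l := by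
  set y := x - x l • EuclideanSpace.single l (1 : ℝ)
  have hyl : y l = 0 := by simp [y]
  have hxy : y + x l • EuclideanSpace.single l (1 : ℝ) = x := sub_add_cancel _ _
  have hline : ∀ s ∈ Set.Ioi (0 : ℝ), y + s • EuclideanSpace.single l (1 : ℝ) ∈ halfSpace l :=
    fun s hs => by simpa [halfSpace, hyl] using hs
  have hK₀ : 0 ≤ K := (norm_nonneg _).trans (hK x hx)
  have hmean : ∀ s ∈ Set.Ioc 0 (x l),
      ‖v x - v (y + s • EuclideanSpace.single l (1 : ℝ))‖ ≤ K * x l := fun s hs => by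
    have hdiff := Convex.norm_image_sub_le_of_norm_hasDerivWithin_le (fun t ht =>
      (hasDerivAt_comp_add_smul_single (hv.differentiableAt
        ((isOpen_halfSpace l).mem_nhds (hline t ht)))).hasDerivWithinAt)
      (fun t ht => hK _ (hline t ht)) (convex_Ioi 0) hs.1 (Set.mem_Ioi.2 hx)
    rw [hxy, Real.norm_of_nonneg (sub_nonneg.2 hs.2)] at hdiff
    exact hdiff.trans (by gcongr; linarith [hs.1])
  have htend := ((hlim y hyl).const_sub (v x)).norm
  rw [sub_zero] at htend
  exact le_of_tendsto htend (eventually_of_mem (Ioc_mem_nhdsGT hx) hmean)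

variable {W : Type*} [NormedAddCommGroup W] [InnerProductSpace ℂ W]
  {A : Fin n → Fin n → W →L[ℂ] W} {l : Fin n} {v : EuclideanSpace ℝ (Fin n) → W} {B : ℝ}

lemma IsElliptic.mul_norm_le {κ₀ : ℝ} (hA : IsElliptic A κ₀) (l : Fin n) (η : W) :
    κ₀ * ‖η‖ ≤ ‖A l l η‖ := by
  rcases eq_or_ne η 0 with rfl | hη
  · simp
  have hcoercive : κ₀ * ‖η‖ ^ 2 ≤ (inner ℂ η (A l l η)).re := by
    have hsingle := hA (Pi.single l 1) η
    rw [gradForm, Finset.sum_eq_single l (fun r _ hr => by simp [hr]) (by simp),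
      Finset.sum_eq_single l (fun s _ hs => by simp [hs]) (by simp)] at hsingle
    simpa [Pi.single_apply, ite_smul, apply_ite] using hsingle
  refine le_of_mul_le_mul_right ?_ (norm_pos_iff.2 hη)
  calc κ₀ * ‖η‖ * ‖η‖
    _ = κ₀ * ‖η‖ ^ 2 := by ring
    _ ≤ ‖η‖ * ‖A l l η‖ := hcoercive.trans ((Complex.re_le_norm _).trans (norm_inner_le_norm _ _))
    _ = ‖A l l η‖ * ‖η‖ := mul_comm _ _

/-- A combination of first derivatives whose derivative along `e_l` involves, for solutions of the
system, only second derivatives in the directions other than `e_l`. -/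
def normalFlux (A : Fin n → Fin n → W →L[ℂ] W) (l : Fin n) (v : EuclideanSpace ℝ (Fin n) → W)
    (x : EuclideanSpace ℝ (Fin n)) : W :=
  A l l (pd l v x) + ∑ r ∈ Finset.univ.erase l, (A r l + A l r) (pd r v x)

lemma differentiableOn_normalFlux (hv : ContDiffOn ℝ 2 v (halfSpace l)) :
    DifferentiableOn ℝ (normalFlux A l v) (halfSpace l) := by
  have hpd : ∀ r, DifferentiableOn ℝ (pd r v) (halfSpace l) := fun r =>
    (contDiffOn_pd (isOpen_halfSpace l) hv (k := 1) (by norm_num) r).differentiableOn one_ne_zero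
  have happly : ∀ (T : W →L[ℂ] W) r, DifferentiableOn ℝ (fun x => T (pd r v x)) (halfSpace l) :=
    fun T r => (T.restrictScalars ℝ).differentiable.comp_differentiableOn (hpd r)
  exact (happly _ l).fun_add (DifferentiableOn.fun_sum fun r _ => happly _ r)

lemma pd_normalFlux (hv : ContDiffOn ℝ 2 v (halfSpace l)) {x : EuclideanSpace ℝ (Fin n)}
    (hx : x ∈ halfSpace l) : pd l (normalFlux A l v) x =
      A l l (pd l (pd l v) x) + ∑ r ∈ Finset.univ.erase l, (A r l + A l r) (pd l (pd r v) x) := by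
  have hpd : ∀ r, HasFDerivAt (pd r v) (fderiv ℝ (pd r v) x) x := fun r =>
    (((contDiffOn_pd (isOpen_halfSpace l) hv (k := 1) (by norm_num) r).differentiableOn
      one_ne_zero).differentiableAt ((isOpen_halfSpace l).mem_nhds hx)).hasFDerivAt
  have hfd := (((A l l).restrictScalars ℝ).hasFDerivAt.comp x (hpd l)).add
    (HasFDerivAt.fun_sum (u := Finset.univ.erase l) fun r _ =>
      ((A r l + A l r).restrictScalars ℝ).hasFDerivAt.comp x (hpd r))
  have hflux : fderiv ℝ (normalFlux A l v) x = _ := hfd.fderiv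
  rw [pd, hflux]
  simp [pd]

lemma pd_normalFlux_eq_neg_sum (hv : ContDiffOn ℝ 2 v (halfSpace l))
    (hsol : SolvesSystemOn A v (halfSpace l)) {x : EuclideanSpace ℝ (Fin n)}
    (hx : x ∈ halfSpace l) : pd l (normalFlux A l v) x =
      -∑ r ∈ Finset.univ.erase l, ∑ s ∈ Finset.univ.erase l, A r s (pd r (pd s v) x) := by
  rw [pd_normalFlux hv hx, eq_neg_iff_add_eq_zero, ← hsol x hx, sum_sum_eq_add_sum_erase l]
  congr 2
  refine Finset.sum_congr rfl fun r _ => ?_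
  rw [pd_comm (isOpen_halfSpace l) hv r l hx, add_apply]

lemma norm_sum_erase_apply_le (T : Fin n → W →L[ℂ] W) {w : Fin n → W}
    (hw : ∀ r ≠ l, ‖w r‖ ≤ B) :
    ‖∑ r ∈ Finset.univ.erase l, T r (w r)‖ ≤ ∑ r ∈ Finset.univ.erase l, ‖T r‖ * B :=
  norm_sum_le_of_le _ fun r hr => (T r).le_opNorm_of_le (hw r (Finset.ne_of_mem_erase hr))

lemma exists_norm_normalFlux_sub_le (hv : ContDiffOn ℝ 2 v (halfSpace l))
    (hsol : SolvesSystemOn A v (halfSpace l))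
    (hB : ∀ x ∈ halfSpace l, ∀ r ≠ l, ∀ s ≠ l, ‖pd r (pd s v) x‖ ≤ B) :
    ∃ K, ∀ x ∈ halfSpace l, ∀ s ∈ Set.Icc (0 : ℝ) 1,
      ‖normalFlux A l v (x + s • EuclideanSpace.single l 1) - normalFlux A l v x‖ ≤ K := by
  refine ⟨∑ r ∈ Finset.univ.erase l, ∑ s ∈ Finset.univ.erase l, ‖A r s‖ * B, fun x hx s hs => ?_⟩
  have hline : ∀ t ∈ Set.Icc (0 : ℝ) 1, x + t • EuclideanSpace.single l 1 ∈ halfSpace l :=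
    fun t ht => by simpa [halfSpace] using add_pos_of_pos_of_nonneg hx ht.1
  have hmean := Convex.norm_image_sub_le_of_norm_hasDerivWithin_le (fun t ht =>
    (hasDerivAt_comp_add_smul_single ((differentiableOn_normalFlux (A := A) hv).differentiableAt
      ((isOpen_halfSpace l).mem_nhds (hline t ht)))).hasDerivWithinAt)
    (fun t ht => by
      rw [pd_normalFlux_eq_neg_sum hv hsol (hline t ht), norm_neg]
      exact norm_sum_le_of_le _ fun r hr => norm_sum_erase_apply_le (A r)
        (hB _ (hline t ht) r (Finset.ne_of_mem_erase hr)))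
    (convex_Icc 0 1) (Set.left_mem_Icc.2 zero_le_one) hs
  rw [zero_smul, add_zero, sub_zero, Real.norm_of_nonneg hs.1] at hmean
  exact hmean.trans (mul_le_of_le_one_right ((norm_nonneg _).trans
    (norm_sum_le_of_le _ fun r hr => norm_sum_erase_apply_le (A r)
        (hB x hx r (Finset.ne_of_mem_erase hr)))) hs.2)

/-- Along a unit segment the increment of `A l l ∘ v` is bounded, and it differs boundedly from the
normal flux, whose variation along the segment is bounded as well. -/
lemma exists_norm_pd_le_of_tangential {κ₀ : ℝ} (hκ₀ : 0 < κ₀) (hA : IsElliptic A κ₀)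
    (hv : ContDiffOn ℝ 2 v (halfSpace l)) (hsol : SolvesSystemOn A v (halfSpace l))
    (hB₀ : ∀ x ∈ halfSpace l, ‖v x‖ ≤ B) (hB₁ : ∀ x ∈ halfSpace l, ∀ r ≠ l, ‖pd r v x‖ ≤ B)
    (hB₂ : ∀ x ∈ halfSpace l, ∀ r ≠ l, ∀ s ≠ l, ‖pd r (pd s v) x‖ ≤ B) :
    ∃ K, ∀ x ∈ halfSpace l, ‖pd l v x‖ ≤ K := by
  obtain ⟨K, hK⟩ := exists_norm_normalFlux_sub_le hv hsol hB₂
  set Q := ∑ r ∈ Finset.univ.erase l, ‖A r l + A l r‖ * B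
  have hflux : ∀ x ∈ halfSpace l, ‖A l l (pd l v x) - normalFlux A l v x‖ ≤ Q := fun x hx => by
    rw [normalFlux, sub_add_cancel_left, norm_neg]
    exact norm_sum_erase_apply_le _ (hB₁ x hx)
  refine ⟨κ₀⁻¹ * (Q + (2 * (‖A l l‖ * B) + (Q + K))), fun x hx => ?_⟩
  have hline : ∀ s ∈ Set.Icc (0 : ℝ) 1, x + s • EuclideanSpace.single l 1 ∈ halfSpace l :=
    fun s hs => by simpa [halfSpace] using add_pos_of_pos_of_nonneg hx hs.1
  have hbound : ‖normalFlux A l v x‖ ≤ 2 * (‖A l l‖ * B) + (Q + K) :=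
    norm_le_of_norm_deriv_sub_le
      (fun s hs => ((A l l).restrictScalars ℝ).hasFDerivAt.comp_hasDerivAt s
        (hasDerivAt_comp_add_smul_single ((hv.differentiableOn two_ne_zero).differentiableAt
          ((isOpen_halfSpace l).mem_nhds (hline s hs)))))
      (fun s hs => (A l l).le_opNorm_of_le (hB₀ _ (hline s hs)))
      (fun s hs => (norm_sub_le_norm_sub_add_norm_sub _ (normalFlux A l v _) _).trans
        (add_le_add (hflux _ (hline s hs)) (hK x hx s hs)))
  rw [le_inv_mul_iff₀ hκ₀]
  refine (hA.mul_norm_le l _).trans ((norm_le_norm_sub_add _ (normalFlux A l v x)).trans ?_)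
  exact add_le_add (hflux x hx) hbound

lemma exists_linear_decay_of_tangential {κ₀ : ℝ} (hκ₀ : 0 < κ₀) (hA : IsElliptic A κ₀)
    (hv : ContDiffOn ℝ 2 v (halfSpace l)) (hsol : SolvesSystemOn A v (halfSpace l))
    (hB₀ : ∀ x ∈ halfSpace l, ‖v x‖ ≤ B) (hB₁ : ∀ x ∈ halfSpace l, ∀ r ≠ l, ‖pd r v x‖ ≤ B)
    (hB₂ : ∀ x ∈ halfSpace l, ∀ r ≠ l, ∀ s ≠ l, ‖pd r (pd s v) x‖ ≤ B)
    (hlim : ∀ x, x l = 0 → Tendsto (fun s : ℝ => v (x + s • EuclideanSpace.single l 1)) (𝓝[>] 0)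
      (𝓝 0)) : ∃ D, ∀ x ∈ halfSpace l, ‖v x‖ ≤ D * x l := by
  obtain ⟨K, hK⟩ := exists_norm_pd_le_of_tangential hκ₀ hA hv hsol hB₀ hB₁ hB₂
  exact ⟨K, fun x hx => norm_le_mul_of_norm_pd_le (hv.differentiableOn two_ne_zero) hK hlim hx⟩

end LinearDecay

section TangentialConvolution

/-- The convolution of `f : ℝⁿ → F` with `φ : ℝᵐ → ℝ` along the subspace `ι(ℝᵐ)` of `ℝⁿ`. When that
subspace is parallel to the boundary of a half-space, only values of `f` in the half-space enter. -/
def tangentialConv {m n : ℕ} {F : Type*} [NormedAddCommGroup F] [NormedSpace ℝ F]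
    (ι : EuclideanSpace ℝ (Fin m) →L[ℝ] EuclideanSpace ℝ (Fin n))
    (φ : EuclideanSpace ℝ (Fin m) → ℝ) (f : EuclideanSpace ℝ (Fin n) → F)
    (x : EuclideanSpace ℝ (Fin n)) : F :=
  ∫ y, φ y • f (x - ι y)

variable {m n : ℕ} {F : Type*} [NormedAddCommGroup F] [NormedSpace ℝ F]
  {ι : EuclideanSpace ℝ (Fin m) →L[ℝ] EuclideanSpace ℝ (Fin n)} {l : Fin n}
  {φ : EuclideanSpace ℝ (Fin m) → ℝ} {f : EuclideanSpace ℝ (Fin n) → F}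
  {x : EuclideanSpace ℝ (Fin n)}

lemma sub_mem_halfSpace (hι : ∀ y, (ι y) l = 0) (hx : x ∈ halfSpace l)
    (y : EuclideanSpace ℝ (Fin m)) : x - ι y ∈ halfSpace l := by
  change 0 < (x - ι y) l
  rw [PiLp.sub_apply, hι, sub_zero]
  exact hx

lemma continuous_comp_const_sub {X : Type*} [TopologicalSpace X]
    {g : EuclideanSpace ℝ (Fin n) → X} (hι : ∀ y, (ι y) l = 0)
    (hg : ContinuousOn g (halfSpace l)) (hx : x ∈ halfSpace l) :
    Continuous fun y => g (x - ι y) :=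
  hg.comp_continuous (by fun_prop) (sub_mem_halfSpace hι hx)

lemma integrable_smul_comp_const_sub (hι : ∀ y, (ι y) l = 0) (hφ : Continuous φ)
    (hc : HasCompactSupport φ) (hf : ContinuousOn f (halfSpace l)) (hx : x ∈ halfSpace l) :
    Integrable fun y => φ y • f (x - ι y) :=
  (hφ.smul (continuous_comp_const_sub hι hf hx)).integrable_of_hasCompactSupport hc.smul_right

lemma continuousOn_tangentialConv (hι : ∀ y, (ι y) l = 0) (hφ : Continuous φ)
    (hc : HasCompactSupport φ) (hf : ContinuousOn f (halfSpace l)) :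
    ContinuousOn (tangentialConv ι φ f) (halfSpace l) := by
  refine continuousOn_integral_of_compact_support (k := tsupport φ) hc ?_ ?_
  · refine ContinuousOn.smul (by fun_prop) (hf.comp (by fun_prop) ?_)
    rintro ⟨x, y⟩ ⟨hx, -⟩
    exact sub_mem_halfSpace hι hx y
  · intro x y _ hy
    simp [image_eq_zero_of_notMem_tsupport hy]

lemma hasFDerivAt_fderiv_sub (hι : ∀ y, (ι y) l = 0) (hf : ContDiffOn ℝ 1 f (halfSpace l))
    (hx : x ∈ halfSpace l) (y : EuclideanSpace ℝ (Fin m)) :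
    HasFDerivAt f (fderiv ℝ f (x - ι y)) (x - ι y) :=
  ((hf.differentiableOn one_ne_zero).differentiableAt
    ((isOpen_halfSpace l).mem_nhds (sub_mem_halfSpace hι hx y))).hasFDerivAt

lemma exists_norm_smul_fderiv_le (hι : ∀ y, (ι y) l = 0) (hc : HasCompactSupport φ)
    (hf : ContDiffOn ℝ 1 f (halfSpace l)) {K : Set (EuclideanSpace ℝ (Fin n))} (hK : IsCompact K)
    (hKl : K ⊆ halfSpace l) :
    ∃ C, ∀ y, ∀ z ∈ K, ‖φ y • fderiv ℝ f (z - ι y)‖ ≤ ‖φ y‖ * C := by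
  obtain ⟨C, hC⟩ : ∃ C, ∀ q ∈ K ×ˢ tsupport φ, ‖fderiv ℝ f (q.1 - ι q.2)‖ ≤ C := by
    refine (hK.prod hc).exists_bound_of_continuousOn
      ((hf.continuousOn_fderiv_of_isOpen (isOpen_halfSpace l) le_rfl).comp (by fun_prop) ?_)
    rintro ⟨z, y⟩ ⟨hz, -⟩
    exact sub_mem_halfSpace hι (hKl hz) y
  refine ⟨C, fun y z hz => ?_⟩
  rw [norm_smul]
  by_cases hy : y ∈ tsupport φ
  · exact mul_le_mul_of_nonneg_left (hC (z, y) ⟨hz, hy⟩) (norm_nonneg _)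
  · simp [image_eq_zero_of_notMem_tsupport hy]

lemma hasFDerivAt_tangentialConv (hι : ∀ y, (ι y) l = 0) (hφ : Continuous φ)
    (hc : HasCompactSupport φ) (hf : ContDiffOn ℝ 1 f (halfSpace l)) (hx : x ∈ halfSpace l) :
    HasFDerivAt (tangentialConv ι φ f) (tangentialConv ι φ (fderiv ℝ f) x) x := by
  have hU := isOpen_halfSpace l
  have hf' := hf.continuousOn_fderiv_of_isOpen hU le_rfl
  obtain ⟨δ, hδ, hδU⟩ := Metric.nhds_basis_closedBall.mem_iff.1 (hU.mem_nhds hx)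
  obtain ⟨C, hC⟩ := exists_norm_smul_fderiv_le hι hc hf (isCompact_closedBall x δ) hδU
  refine hasFDerivAt_integral_of_dominated_of_fderiv_le (closedBall_mem_nhds x hδ) ?_
    (integrable_smul_comp_const_sub hι hφ hc hf.continuousOn hx)
    (integrable_smul_comp_const_sub hι hφ hc hf' hx).aestronglyMeasurable
    (Eventually.of_forall hC)
    ((hφ.norm.integrable_of_hasCompactSupport hc.norm).mul_const C)
    (Eventually.of_forall fun y z hz =>
      ((hasFDerivAt_comp_sub (ι y)).2 (hasFDerivAt_fderiv_sub hι hf (hδU hz) y)).const_smul (φ y))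
  filter_upwards [hU.mem_nhds hx] with z hz
  exact (integrable_smul_comp_const_sub hι hφ hc hf.continuousOn hz).aestronglyMeasurable

lemma contDiffOn_tangentialConv (hι : ∀ y, (ι y) l = 0) (hφ : Continuous φ)
    (hc : HasCompactSupport φ) {k : ℕ} (hf : ContDiffOn ℝ k f (halfSpace l)) :
    ContDiffOn ℝ k (tangentialConv ι φ f) (halfSpace l) := by
  have hU := isOpen_halfSpace l
  induction k generalizing F with
  | zero =>
    rw [Nat.cast_zero, contDiffOn_zero] at hf ⊢
    exact continuousOn_tangentialConv hι hφ hc hf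
  | succ k ih =>
    have hf₁ : ContDiffOn ℝ 1 f (halfSpace l) := hf.of_le (by norm_cast; omega)
    have hderiv := fun x hx => hasFDerivAt_tangentialConv (x := x) hι hφ hc hf₁ hx
    rw [Nat.cast_succ] at hf ⊢
    rw [contDiffOn_succ_iff_fderiv_of_isOpen hU]
    exact ⟨fun x hx => (hderiv x hx).differentiableAt.differentiableWithinAt, by simp,
      (ih (hf.fderiv_of_isOpen hU le_rfl)).congr fun x hx => (hderiv x hx).fderiv⟩

lemma pd_tangentialConv [CompleteSpace F] (hι : ∀ y, (ι y) l = 0) (hφ : Continuous φ)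
    (hc : HasCompactSupport φ) (hf : ContDiffOn ℝ 1 f (halfSpace l)) (r : Fin n) :
    Set.EqOn (pd r (tangentialConv ι φ f)) (tangentialConv ι φ (pd r f)) (halfSpace l) := by
  intro x hx
  have hf' := hf.continuousOn_fderiv_of_isOpen (isOpen_halfSpace l) le_rfl
  rw [pd, (hasFDerivAt_tangentialConv hι hφ hc hf hx).fderiv, tangentialConv,
    ContinuousLinearMap.integral_apply (integrable_smul_comp_const_sub hι hφ hc hf' hx)]
  rfl

lemma pd_pd_tangentialConv [CompleteSpace F] (hι : ∀ y, (ι y) l = 0) (hφ : Continuous φ)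
    (hc : HasCompactSupport φ) (hf : ContDiffOn ℝ 2 f (halfSpace l)) (r s : Fin n) :
    Set.EqOn (pd r (pd s (tangentialConv ι φ f))) (tangentialConv ι φ (pd r (pd s f)))
      (halfSpace l) := by
  have hU := isOpen_halfSpace l
  exact (pd_eqOn hU (pd_tangentialConv hι hφ hc (hf.of_le (by norm_num)) s) r).trans
    (pd_tangentialConv hι hφ hc (contDiffOn_pd hU hf (by norm_num) s) r)

lemma tangentialConv_pd [CompleteSpace F] (hι : ∀ y, (ι y) l = 0) (hφ : ContDiff ℝ 1 φ)
    (hc : HasCompactSupport φ) (hf : ContDiffOn ℝ 1 f (halfSpace l)) {i : Fin m} {r : Fin n}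
    (hr : ι (EuclideanSpace.single i 1) = EuclideanSpace.single r 1) :
    Set.EqOn (tangentialConv ι φ (pd r f)) (tangentialConv ι (pd i φ) f) (halfSpace l) := by
  intro x hx
  have hU := isOpen_halfSpace l
  have hpf : ContinuousOn (pd r f) (halfSpace l) :=
    (contDiffOn_pd (k := 0) hU hf (by norm_num) r).continuousOn
  have hderiv : ∀ y, HasFDerivAt (fun y => f (x - ι y)) ((fderiv ℝ f (x - ι y)).comp (-ι)) y :=
    fun y => (hasFDerivAt_fderiv_sub hι hf hx y).comp y (ι.hasFDerivAt.const_sub x)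
  have hpd : ∀ y, fderiv ℝ (fun y => f (x - ι y)) y (EuclideanSpace.single i 1) =
      -pd r f (x - ι y) := fun y => by
    rw [(hderiv y).fderiv]
    simp [hr, pd]
  have hparts := integral_smul_fderiv_eq_neg_fderiv_smul_of_integrable
    (μ := (volume : Measure (EuclideanSpace ℝ (Fin m)))) (f := φ) (g := fun y => f (x - ι y))
    (v := EuclideanSpace.single i 1)
    (integrable_smul_comp_const_sub hι (continuous_pd hφ i) (hasCompactSupport_pd hc i)
      hf.continuousOn hx)
    (by
      simp_rw [hpd, smul_neg]
      exact (integrable_smul_comp_const_sub hι hφ.continuous hc hpf hx).neg)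
    (integrable_smul_comp_const_sub hι hφ.continuous hc hf.continuousOn hx)
    (fun y _ => hφ.differentiable one_ne_zero y) (fun y _ => (hderiv y).differentiableAt)
  simp_rw [hpd, smul_neg, integral_neg] at hparts
  exact neg_injective hparts

lemma pd_tangentialConv_eq_tangentialConv_pd [CompleteSpace F] (hι : ∀ y, (ι y) l = 0)
    (hφ : ContDiff ℝ 1 φ) (hc : HasCompactSupport φ) (hf : ContDiffOn ℝ 1 f (halfSpace l))
    {i : Fin m} {r : Fin n} (hr : ι (EuclideanSpace.single i 1) = EuclideanSpace.single r 1) :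
    Set.EqOn (pd r (tangentialConv ι φ f)) (tangentialConv ι (pd i φ) f) (halfSpace l) :=
  (pd_tangentialConv hι hφ.continuous hc hf r).trans (tangentialConv_pd hι hφ hc hf hr)

lemma solvesSystemOn_tangentialConv {W : Type*} [NormedAddCommGroup W] [InnerProductSpace ℂ W]
    [CompleteSpace W] {A : Fin n → Fin n → W →L[ℂ] W} {v : EuclideanSpace ℝ (Fin n) → W}
    (hι : ∀ y, (ι y) l = 0) (hφ : Continuous φ) (hc : HasCompactSupport φ)
    (hv : ContDiffOn ℝ 2 v (halfSpace l)) (hsol : SolvesSystemOn A v (halfSpace l)) :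
    SolvesSystemOn A (tangentialConv ι φ v) (halfSpace l) := by
  intro x hx
  have hU := isOpen_halfSpace l
  have hint : ∀ r s, Integrable fun y => φ y • pd r (pd s v) (x - ι y) := fun r s =>
    integrable_smul_comp_const_sub hι hφ hc (contDiffOn_pd (k := 0) hU
      (contDiffOn_pd (k := 1) hU hv (by norm_num) s) (by norm_num) r).continuousOn hx
  calc ∑ r, ∑ s, A r s (pd r (pd s (tangentialConv ι φ v)) x)
      = ∑ r, ∑ s, ∫ y, A r s (φ y • pd r (pd s v) (x - ι y)) := by
        refine Finset.sum_congr rfl fun r _ => Finset.sum_congr rfl fun s _ => ?_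
        rw [pd_pd_tangentialConv hι hφ hc hv r s hx]
        exact ((A r s).integral_comp_comm (hint r s)).symm
    _ = ∫ y, φ y • ∑ r, ∑ s, A r s (pd r (pd s v) (x - ι y)) := by
        have hint' := fun r s => (A r s).integrable_comp (hint r s)
        simp_rw [← integral_finsetSum _ fun s _ => hint' _ s]
        rw [← integral_finsetSum _ fun r _ => integrable_finsetSum _ fun s _ => hint' r s]
        simp_rw [Finset.smul_sum, ContinuousLinearMap.map_smul_of_tower]
    _ = 0 := by simp_rw [hsol _ (sub_mem_halfSpace hι hx _), smul_zero, integral_zero]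

end TangentialConvolution

section TranslatesOfMajorant

lemma le_add_div_rpow_mul_rpow {p : ℝ} (hp : 1 ≤ p) {c : ℝ≥0∞} (hc : c ≠ 0) (hc' : c ≠ ∞)
    (a : ℝ≥0∞) : a ≤ c + c / c ^ p * a ^ p := by
  rcases le_total a c with hac | hca
  · exact hac.trans le_self_add
  · have hone : 1 ≤ a / c := by
      rw [ENNReal.le_div_iff_mul_le (Or.inl hc) (Or.inl hc'), one_mul]
      exact hca
    calc a = c * (a / c) ^ (1 : ℝ) := by
          rw [ENNReal.rpow_one, ENNReal.mul_div_cancel hc hc']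
      _ ≤ c * (a / c) ^ p := mul_le_mul_right (ENNReal.rpow_le_rpow_of_exponent_le hone hp) c
      _ = c / c ^ p * a ^ p := by
          rw [ENNReal.div_rpow_of_nonneg _ _ (by linarith)]
          simp only [div_eq_mul_inv]
          ring
      _ ≤ c + c / c ^ p * a ^ p := le_add_self

lemma exists_enorm_le_of_hasCompactSupport {X F : Type*} [TopologicalSpace X]
    [NormedAddCommGroup F] {f : X → F} (hf : Continuous f) (hc : HasCompactSupport f) :
    ∃ S : ℝ≥0∞, S ≠ ∞ ∧ ∀ x, ‖f x‖ₑ ≤ S := by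
  obtain ⟨C, hC⟩ := hc.exists_bound_of_continuous hf
  exact ⟨ENNReal.ofReal C, ENNReal.ofReal_ne_top, fun x =>
    (ofReal_norm (f x)).symm.trans_le (ENNReal.ofReal_le_ofReal (hC x))⟩

lemma tendsto_lintegral_enorm_comp_sub_mul_cobounded {E : Type*} [NormedAddCommGroup E]
    [MeasurableSpace E] [BorelSpace E] {μ : Measure E} {φ : E → ℝ} {h : E → ℝ≥0∞}
    (hφ : Continuous φ) (hφc : HasCompactSupport φ) (hh : Measurable h) (hint : ∫⁻ z, h z ∂μ < ∞) :
    Tendsto (fun x => ∫⁻ z, ‖φ (x - z)‖ₑ * h z ∂μ) (Bornology.cobounded E) (𝓝 0) := by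
  obtain ⟨S, hS, hφS⟩ := exists_enorm_le_of_hasCompactSupport hφ hφc
  have : (Bornology.cobounded E).IsCountablyGenerated := by
    rw [← comap_norm_atTop]
    infer_instance
  have hφm : Measurable φ := hφ.measurable
  rw [← lintegral_zero (μ := μ)]
  refine tendsto_lintegral_filter_of_dominated_convergence (fun z => S * h z)
    (Eventually.of_forall fun x => by fun_prop)
    (Eventually.of_forall fun x => ae_of_all _ fun z => by gcongr; exact hφS _)
    (by rw [lintegral_const_mul' S _ hS]; finiteness) (ae_of_all _ fun z => ?_)
  refine tendsto_const_nhds.congr' ?_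
  have hbdd : Bornology.IsBounded ((· - z) ⁻¹' tsupport φ) :=
    ((Homeomorph.subRight z).isCompact_preimage.2 hφc).isBounded
  filter_upwards [Bornology.isBounded_def.1 hbdd] with x (hx : x - z ∉ tsupport φ)
  rw [image_eq_zero_of_notMem_tsupport hx, enorm_zero, zero_mul]

variable {E : Type*} [NormedAddCommGroup E] [ProperSpace E] [MeasurableSpace E] [BorelSpace E]
  {μ : Measure E} [μ.IsAddHaarMeasure]
  {φ : E → ℝ} {N : E → ℝ≥0∞} {p : ℝ}

lemma lintegral_enorm_mul_comp_sub_le (hφ : Continuous φ) (hN : Measurable N) (hp : 1 ≤ p)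
    {c : ℝ≥0∞} (hc : c ≠ 0) (hc' : c ≠ ∞) (x : E) :
    ∫⁻ y, ‖φ y‖ₑ * N (x - y) ∂μ ≤
      c * ∫⁻ y, ‖φ y‖ₑ ∂μ + c / c ^ p * ∫⁻ z, ‖φ (x - z)‖ₑ * N z ^ p ∂μ := by
  have hφm : Measurable φ := hφ.measurable
  calc ∫⁻ y, ‖φ y‖ₑ * N (x - y) ∂μ
      ≤ ∫⁻ y, (c * ‖φ y‖ₑ + c / c ^ p * (‖φ (x - (x - y))‖ₑ * N (x - y) ^ p)) ∂μ := by
        refine lintegral_mono fun y => ?_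
        refine (mul_le_mul_right (le_add_div_rpow_mul_rpow hp hc hc' _) _).trans_eq ?_
        rw [sub_sub_cancel]
        ring
    _ = c * ∫⁻ y, ‖φ y‖ₑ ∂μ +
          c / c ^ p * ∫⁻ y, ‖φ (x - (x - y))‖ₑ * N (x - y) ^ p ∂μ := by
        rw [lintegral_add_left (by fun_prop), lintegral_const_mul _ (by fun_prop),
          lintegral_const_mul _ (by fun_prop)]
    _ = c * ∫⁻ y, ‖φ y‖ₑ ∂μ + c / c ^ p * ∫⁻ z, ‖φ (x - z)‖ₑ * N z ^ p ∂μ := by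
        rw [lintegral_sub_left_eq_self (fun z => ‖φ (x - z)‖ₑ * N z ^ p) x]

lemma exists_lintegral_enorm_mul_comp_sub_le (hφ : Continuous φ) (hφc : HasCompactSupport φ)
    (hN : Measurable N) (hp : 1 ≤ p) (hNp : ∫⁻ z, N z ^ p ∂μ < ∞) :
    ∃ B : ℝ≥0∞, B ≠ ∞ ∧ ∀ x, ∫⁻ y, ‖φ y‖ₑ * N (x - y) ∂μ ≤ B := by
  obtain ⟨S, hS, hφS⟩ := exists_enorm_le_of_hasCompactSupport hφ hφc
  have hφint : ∫⁻ y, ‖φ y‖ₑ ∂μ < ∞ := (hφ.integrable_of_hasCompactSupport hφc).2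
  refine ⟨1 * ∫⁻ y, ‖φ y‖ₑ ∂μ + 1 / 1 ^ p * (S * ∫⁻ z, N z ^ p ∂μ), by finiteness, fun x => ?_⟩
  refine (lintegral_enorm_mul_comp_sub_le hφ hN hp one_ne_zero ENNReal.one_ne_top x).trans ?_
  rw [← lintegral_const_mul' S _ hS]
  gcongr
  exact hφS _

lemma tendsto_lintegral_enorm_mul_comp_sub_cobounded (hφ : Continuous φ)
    (hφc : HasCompactSupport φ) (hN : Measurable N) (hp : 1 ≤ p) (hNp : ∫⁻ z, N z ^ p ∂μ < ∞) :
    Tendsto (fun x => ∫⁻ y, ‖φ y‖ₑ * N (x - y) ∂μ) (Bornology.cobounded E) (𝓝 0) := by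
  have hφint : ∫⁻ y, ‖φ y‖ₑ ∂μ < ∞ := (hφ.integrable_of_hasCompactSupport hφc).2
  have htail := tendsto_lintegral_enorm_comp_sub_mul_cobounded hφ hφc (hN.pow_const p) hNp
  refine ENNReal.tendsto_nhds_zero.2 fun ε hε => ?_
  obtain ⟨c, hc, hcε⟩ : ∃ c : ℝ≥0, 0 < c ∧ c * ∫⁻ y, ‖φ y‖ₑ ∂μ < ε :=
    ENNReal.exists_nnreal_pos_mul_lt hφint.ne hε.ne'
  have hc' : (c : ℝ≥0∞) ≠ 0 := by simpa using hc.ne'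
  have hdiv : (c : ℝ≥0∞) / (c : ℝ≥0∞) ^ p ≠ ∞ :=
    ENNReal.div_ne_top ENNReal.coe_ne_top (by simp [hc'])
  have hlim := (ENNReal.Tendsto.const_mul htail (Or.inr hdiv)).const_add (c * ∫⁻ y, ‖φ y‖ₑ ∂μ)
  rw [mul_zero, add_zero] at hlim
  filter_upwards [hlim.eventually_lt_const hcε] with x hx
  exact (lintegral_enorm_mul_comp_sub_le hφ hN hp hc' ENNReal.coe_ne_top x).trans hx.le

end TranslatesOfMajorant

section Coordinates

variable {n : ℕ}

lemma toUp_apply (y : EuclideanSpace ℝ (Fin (n - 1))) (t : ℝ) (i : Fin n) :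
    toUp y t i = if h : (i : ℕ) < n - 1 then y ⟨i, h⟩ else t := rfl

lemma toUp_add_toUp (x y : EuclideanSpace ℝ (Fin (n - 1))) (s t : ℝ) :
    toUp (n := n) x s + toUp y t = toUp (x + y) (s + t) := by
  ext i
  simp only [toUp_apply, PiLp.add_apply]
  split_ifs <;> rfl

lemma smul_toUp (c : ℝ) (y : EuclideanSpace ℝ (Fin (n - 1))) (t : ℝ) :
    c • toUp (n := n) y t = toUp (c • y) (c * t) := by
  ext i
  simp only [toUp_apply, PiLp.smul_apply, smul_eq_mul]
  split_ifs <;> rfl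

/-- The inclusion `y' ↦ (y', 0)` of the boundary hyperplane `ℝ^{n-1}` into `ℝⁿ`. -/
def boundaryInclusion (n : ℕ) :
    EuclideanSpace ℝ (Fin (n - 1)) →L[ℝ] EuclideanSpace ℝ (Fin n) :=
  LinearMap.toContinuousLinearMap
    { toFun := fun y => toUp y 0
      map_add' := fun x y => by rw [toUp_add_toUp, add_zero]
      map_smul' := fun c y => by rw [smul_toUp, mul_zero, RingHom.id_apply] }

lemma boundaryInclusion_apply (y : EuclideanSpace ℝ (Fin (n - 1))) :
    boundaryInclusion n y = toUp y 0 := rfl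

lemma toUp_lastIdx (hn : 0 < n) (x : EuclideanSpace ℝ (Fin (n - 1))) (t : ℝ) :
    toUp x t (lastIdx n hn) = t := by
  simp [toUp_apply, lastIdx]

lemma boundaryInclusion_lastIdx (hn : 0 < n) (y : EuclideanSpace ℝ (Fin (n - 1))) :
    boundaryInclusion n y (lastIdx n hn) = 0 := toUp_lastIdx hn y 0

lemma boundaryInclusion_single (i : Fin (n - 1)) :
    boundaryInclusion n (EuclideanSpace.single i 1) = EuclideanSpace.single (finUp i) 1 := by
  ext j
  rw [boundaryInclusion_apply, toUp_apply]
  simp only [PiLp.single_apply, finUp, Fin.ext_iff]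
  split_ifs <;> first | rfl | omega

lemma toUp_sub_boundaryInclusion (x y : EuclideanSpace ℝ (Fin (n - 1))) (t : ℝ) :
    toUp x t - boundaryInclusion n y = toUp (x - y) t := by
  rw [sub_eq_add_neg, ← map_neg, boundaryInclusion_apply, toUp_add_toUp, add_zero,
    ← sub_eq_add_neg]

lemma toUp_add_smul_single_finUp (x : EuclideanSpace ℝ (Fin (n - 1))) (t s : ℝ)
    (i : Fin (n - 1)) :
    toUp x t + s • EuclideanSpace.single (finUp i) 1 =
      toUp (x + s • EuclideanSpace.single i 1) t := by
  rw [← boundaryInclusion_single, boundaryInclusion_apply, smul_toUp, toUp_add_toUp, mul_zero,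
    add_zero]

lemma toUp_xinit (hn : 0 < n) (x : EuclideanSpace ℝ (Fin n)) :
    toUp (xinit x) (x (lastIdx n hn)) = x := by
  ext j
  rw [toUp_apply]
  split_ifs with hj
  · rfl
  · have hlast : lastIdx n hn = j := Fin.ext (by simp only [lastIdx]; omega)
    rw [hlast]

lemma smul_single_lastIdx (hn : 0 < n) (s : ℝ) :
    s • EuclideanSpace.single (lastIdx n hn) (1 : ℝ) = toUp 0 s := by
  ext j
  simp only [toUp_apply, PiLp.smul_apply, PiLp.single_apply, smul_eq_mul, lastIdx, Fin.ext_iff,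
    PiLp.zero_apply]
  split_ifs <;> first | omega | simp

lemma exists_finUp_eq (hn : 0 < n) {r : Fin n} (hr : r ≠ lastIdx n hn) : ∃ i, finUp i = r := by
  have hval : (r : ℕ) ≠ n - 1 := fun h => hr (Fin.ext h)
  exact ⟨⟨r, by omega⟩, rfl⟩

lemma finUp_ne_lastIdx (hn : 0 < n) (i : Fin (n - 1)) : finUp i ≠ lastIdx n hn :=
  fun h => i.isLt.ne (congrArg Fin.val h)

lemma upperHalfSpace_eq_halfSpace (hn : 0 < n) :
    upperHalfSpace n = halfSpace (lastIdx n hn) := by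
  simp only [upperHalfSpace, halfSpace, xlast, dif_pos hn, lastIdx]

lemma toUp_mem_halfSpace (hn : 0 < n) (x : EuclideanSpace ℝ (Fin (n - 1))) {t : ℝ}
    (ht : 0 < t) : toUp x t ∈ halfSpace (lastIdx n hn) := by
  change 0 < toUp x t (lastIdx n hn)
  rwa [toUp_lastIdx]

end Coordinates

section RadialMaximalFunction

variable {n : ℕ} {F : Type*} [NormedAddCommGroup F]

/-- The radial maximal function `x' ↦ sup_{t > 0} |u(x', t)|`. -/
def radialMax (u : EuclideanSpace ℝ (Fin n) → F) (x' : EuclideanSpace ℝ (Fin (n - 1))) :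
    ℝ≥0∞ :=
  ⨆ (t : ℝ) (_ : 0 < t), ‖u (toUp x' t)‖ₑ

lemma enorm_le_radialMax (u : EuclideanSpace ℝ (Fin n) → F) (x' : EuclideanSpace ℝ (Fin (n - 1)))
    {t : ℝ} (ht : 0 < t) : ‖u (toUp x' t)‖ₑ ≤ radialMax u x' :=
  le_iSup₂_of_le t ht le_rfl

lemma radialMax_le_ntMax {κ : ℝ} (hκ : 0 < κ) (u : EuclideanSpace ℝ (Fin n) → F)
    (x' : EuclideanSpace ℝ (Fin (n - 1))) : radialMax u x' ≤ ntMax κ u x' :=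
  iSup₂_le fun t ht => le_iSup_of_le x' <| le_iSup₂_of_le t
    ⟨ht, (dist_self x').trans_lt (mul_pos hκ ht)⟩ le_rfl

lemma continuous_toUp_left (t : ℝ) :
    Continuous fun x' : EuclideanSpace ℝ (Fin (n - 1)) => toUp (n := n) x' t := by
  have h : (fun x' => toUp (n := n) x' t) = fun x' => boundaryInclusion n x' + toUp 0 t := by
    funext x'
    rw [boundaryInclusion_apply, toUp_add_toUp, add_zero, zero_add]
  rw [h]
  fun_prop

lemma measurable_radialMax (hn : 0 < n) {u : EuclideanSpace ℝ (Fin n) → F}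
    (hu : ContinuousOn u (halfSpace (lastIdx n hn))) : Measurable (radialMax u) := by
  refine (lowerSemicontinuous_biSup fun t ht => ?_).measurable
  exact (hu.comp_continuous (continuous_toUp_left t) fun x' =>
    toUp_mem_halfSpace hn x' ht).enorm.lowerSemicontinuous

lemma tendsto_prodMk_nhdsGT_ntFilter {κ : ℝ} (hκ : 0 < κ) (x' : EuclideanSpace ℝ (Fin (n - 1))) :
    Tendsto (fun t : ℝ => (x', t)) (𝓝[>] 0) (ntFilter κ x') := by
  refine tendsto_inf.2 ⟨?_, tendsto_principal.2 ?_⟩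
  · exact (Continuous.prodMk_right x').continuousAt.tendsto.mono_left nhdsWithin_le_nhds
  · filter_upwards [self_mem_nhdsWithin] with t ht
    exact ⟨ht, (dist_self x').trans_lt (mul_pos hκ ht)⟩

end RadialMaximalFunction

section BoundaryBehaviour

variable {n : ℕ} {F : Type*} [NormedAddCommGroup F] [NormedSpace ℝ F]
  {φ : EuclideanSpace ℝ (Fin (n - 1)) → ℝ} {u : EuclideanSpace ℝ (Fin n) → F} {p : ℝ}

lemma enorm_tangentialConv_toUp_le (φ : EuclideanSpace ℝ (Fin (n - 1)) → ℝ)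
    (u : EuclideanSpace ℝ (Fin n) → F) (x : EuclideanSpace ℝ (Fin (n - 1))) {t : ℝ}
    (ht : 0 < t) :
    ‖tangentialConv (boundaryInclusion n) φ u (toUp x t)‖ₑ ≤
      ∫⁻ y, ‖φ y‖ₑ * radialMax u (x - y) := by
  refine (enorm_integral_le_lintegral_enorm _).trans (lintegral_mono fun y => ?_)
  rw [enorm_smul, toUp_sub_boundaryInclusion]
  exact mul_le_mul_right (enorm_le_radialMax u _ ht) _

lemma pd_finUp_tangentialConv [CompleteSpace F] (hn : 0 < n) (hφ : ContDiff ℝ 1 φ)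
    (hc : HasCompactSupport φ) (hu : ContDiffOn ℝ 1 u (halfSpace (lastIdx n hn)))
    (i : Fin (n - 1)) :
    Set.EqOn (pd (finUp i) (tangentialConv (boundaryInclusion n) φ u))
      (tangentialConv (boundaryInclusion n) (pd i φ) u) (halfSpace (lastIdx n hn)) :=
  pd_tangentialConv_eq_tangentialConv_pd (boundaryInclusion_lastIdx hn) hφ hc hu
    (boundaryInclusion_single i)

lemma exists_norm_tangentialConv_le (hn : 0 < n) (hφ : Continuous φ) (hc : HasCompactSupport φ)
    (hu : ContinuousOn u (halfSpace (lastIdx n hn))) (hp : 1 ≤ p)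
    (hN : ∫⁻ x', radialMax u x' ^ p < ∞) :
    ∃ B, ∀ x ∈ halfSpace (lastIdx n hn), ‖tangentialConv (boundaryInclusion n) φ u x‖ ≤ B := by
  obtain ⟨B, hB, hle⟩ :=
    exists_lintegral_enorm_mul_comp_sub_le hφ hc (measurable_radialMax hn hu) hp hN
  refine ⟨B.toReal, fun x hx => ?_⟩
  rw [← toUp_xinit hn x, ← toReal_enorm]
  exact ENNReal.toReal_mono hB ((enorm_tangentialConv_toUp_le φ u _ hx).trans (hle _))

lemma tendsto_tangentialConv_toUp_nhdsGT_zero (hn : 0 < n) (hφ : Continuous φ)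
    (hc : HasCompactSupport φ) (hu : ContinuousOn u (halfSpace (lastIdx n hn))) (hp : 1 ≤ p)
    (hN : ∫⁻ x', radialMax u x' ^ p < ∞)
    (hlim : ∀ᵐ x', Tendsto (fun t => u (toUp x' t)) (𝓝[>] 0) (𝓝 0))
    (x : EuclideanSpace ℝ (Fin (n - 1))) :
    Tendsto (fun t => tangentialConv (boundaryInclusion n) φ u (toUp x t)) (𝓝[>] 0) (𝓝 0) := by
  have hNm : Measurable (radialMax u) := measurable_radialMax hn hu
  obtain ⟨B, hB, hle⟩ := exists_lintegral_enorm_mul_comp_sub_le hφ hc hNm hp hN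
  have hfin : ∀ᵐ y, radialMax u y < ∞ := by
    filter_upwards [ae_lt_top (hNm.pow_const p) hN.ne] with y hy
    exact (ENNReal.rpow_lt_top_iff_of_pos (by linarith)).1 hy
  have hae := (Measure.measurePreserving_sub_left volume x).quasiMeasurePreserving
  have hφm : Measurable φ := hφ.measurable
  rw [← integral_zero (EuclideanSpace ℝ (Fin (n - 1))) F]
  refine tendsto_integral_filter_of_dominated_convergence
    (fun y => ‖φ y‖ * (radialMax u (x - y)).toReal) ?_ ?_ ⟨by fun_prop, ?_⟩ ?_
  · filter_upwards [self_mem_nhdsWithin] with t ht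
    exact (integrable_smul_comp_const_sub (boundaryInclusion_lastIdx hn) hφ hc hu
      (toUp_mem_halfSpace hn x ht)).aestronglyMeasurable
  · filter_upwards [self_mem_nhdsWithin] with t ht
    filter_upwards [hae.ae hfin] with y hy
    rw [norm_smul, toUp_sub_boundaryInclusion, ← toReal_enorm (u _)]
    exact mul_le_mul_of_nonneg_left (ENNReal.toReal_mono hy.ne (enorm_le_radialMax u _ ht))
      (norm_nonneg _)
  · refine (lintegral_mono fun y => ?_).trans_lt ((hle x).trans_lt hB.lt_top)
    rw [enorm_mul, enorm_norm, Real.enorm_of_nonneg ENNReal.toReal_nonneg]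
    exact mul_le_mul_right ENNReal.ofReal_toReal_le _
  · filter_upwards [hae.ae hlim] with y hy
    simp_rw [toUp_sub_boundaryInclusion]
    simpa only [smul_zero] using hy.const_smul (φ y)

lemma tendsto_tangentialConv_add_smul_single_nhdsGT_zero (hn : 0 < n) (hφ : Continuous φ)
    (hc : HasCompactSupport φ) (hu : ContinuousOn u (halfSpace (lastIdx n hn))) (hp : 1 ≤ p)
    (hN : ∫⁻ x', radialMax u x' ^ p < ∞)
    (hlim : ∀ᵐ x', Tendsto (fun t => u (toUp x' t)) (𝓝[>] 0) (𝓝 0))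
    {x : EuclideanSpace ℝ (Fin n)} (hx : x (lastIdx n hn) = 0) :
    Tendsto (fun s : ℝ => tangentialConv (boundaryInclusion n) φ u
      (x + s • EuclideanSpace.single (lastIdx n hn) 1)) (𝓝[>] 0) (𝓝 0) := by
  obtain ⟨x', rfl⟩ : ∃ x', toUp x' 0 = x := ⟨xinit x, by rw [← hx, toUp_xinit hn]⟩
  simp only [smul_single_lastIdx, toUp_add_toUp, add_zero, zero_add]
  exact tendsto_tangentialConv_toUp_nhdsGT_zero hn hφ hc hu hp hN hlim x'

lemma tendsto_add_smul_atTop_cobounded {E : Type*} [NormedAddCommGroup E] [NormedSpace ℝ E]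
    (x : E) {e : E} (he : e ≠ 0) :
    Tendsto (fun s : ℝ => x + s • e) atTop (Bornology.cobounded E) := by
  refine (tendsto_const_add_cobounded x).comp (tendsto_norm_atTop_iff_cobounded.1 ?_)
  simp_rw [norm_smul]
  exact tendsto_norm_atTop_atTop.atTop_mul_const (norm_pos_iff.2 he)

lemma tangentialConv_eqOn_zero_of_pd_eqOn_zero (hn : 0 < n) (hφ : Continuous φ)
    (hc : HasCompactSupport φ) (hu : ContDiffOn ℝ 1 u (halfSpace (lastIdx n hn))) (hp : 1 ≤ p)
    (hN : ∫⁻ x', radialMax u x' ^ p < ∞) (i : Fin (n - 1))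
    (hpd : Set.EqOn (pd (finUp i) (tangentialConv (boundaryInclusion n) φ u)) 0
      (halfSpace (lastIdx n hn))) :
    Set.EqOn (tangentialConv (boundaryInclusion n) φ u) 0 (halfSpace (lastIdx n hn)) := by
  intro x hx
  obtain ⟨x', t, ht, rfl⟩ : ∃ x' t, 0 < t ∧ toUp x' t = x :=
    ⟨xinit x, x (lastIdx n hn), hx, toUp_xinit hn x⟩
  have hdiff : DifferentiableOn ℝ (tangentialConv (boundaryInclusion n) φ u)
      (halfSpace (lastIdx n hn)) := fun x hx => (hasFDerivAt_tangentialConv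
    (boundaryInclusion_lastIdx hn) hφ hc hu hx).differentiableAt.differentiableWithinAt
  have hline : Tendsto (fun s : ℝ => x' + s • EuclideanSpace.single i (1 : ℝ)) atTop
      (Bornology.cobounded _) := tendsto_add_smul_atTop_cobounded _ (by simp)
  have hlim := (tendsto_lintegral_enorm_mul_comp_sub_cobounded hφ hc
    (measurable_radialMax hn hu.continuousOn) hp hN).comp hline
  refine enorm_eq_zero.1 (nonpos_iff_eq_zero.1 (ge_of_tendsto' hlim fun s => ?_))
  rw [← comp_add_smul_single_eq_of_pd_eqOn_zero (finUp_ne_lastIdx hn i) hdiff hpd hx s,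
    toUp_add_smul_single_finUp]
  exact enorm_tangentialConv_toUp_le φ u _ ht

lemma eqOn_zero_of_forall_tangentialConv_eqOn_zero [CompleteSpace F] {m : ℕ} {l : Fin n}
    {ι : EuclideanSpace ℝ (Fin m) →L[ℝ] EuclideanSpace ℝ (Fin n)} (hι : ∀ y, (ι y) l = 0)
    (hu : ContinuousOn u (halfSpace l))
    (h : ∀ φ : EuclideanSpace ℝ (Fin m) → ℝ, ContDiff ℝ (⊤ : ℕ∞) φ → HasCompactSupport φ →
      Set.EqOn (tangentialConv ι φ u) 0 (halfSpace l)) :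
    Set.EqOn u 0 (halfSpace l) := by
  intro x hx
  have hcont : Continuous fun y => u (x - ι (-y)) :=
    (continuous_comp_const_sub hι hu hx).comp continuous_neg
  have hzero : ∀ k, mollify k (fun y => u (x - ι (-y))) 0 = 0 := fun k => by
    have := h _ ((mollifier m k).contDiff_normed (μ := volume))
      (mollifier m k).hasCompactSupport_normed hx
    simpa [mollify, tangentialConv, convolution] using this
  have hlim := tendsto_mollify hcont 0
  simp_rw [hzero] at hlim
  simpa using tendsto_nhds_unique hlim tendsto_const_nhds

end BoundaryBehaviour

section Uniqueness

variable {n : ℕ} {W : Type*} [NormedAddCommGroup W] [InnerProductSpace ℂ W]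
  {A : Fin n → Fin n → W →L[ℂ] W} {u : EuclideanSpace ℝ (Fin n) → W} {p : ℝ}

/-- Smooth compactly supported real functions on `ℝᵐ`, the kernels used to regularise in the
tangential directions. -/
def IsTestFunction {m : ℕ} (φ : EuclideanSpace ℝ (Fin m) → ℝ) : Prop :=
  ContDiff ℝ (⊤ : ℕ∞) φ ∧ HasCompactSupport φ

namespace IsTestFunction

variable {m : ℕ} {φ : EuclideanSpace ℝ (Fin m) → ℝ}

lemma contDiff (hφ : IsTestFunction φ) (k : ℕ) : ContDiff ℝ k φ :=
  hφ.1.of_le (mod_cast le_top)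

protected lemma continuous (hφ : IsTestFunction φ) : Continuous φ := hφ.1.continuous

protected lemma pd (hφ : IsTestFunction φ) (i : Fin m) : IsTestFunction (pd i φ) :=
  ⟨(hφ.1.fderiv_right (m := (⊤ : ℕ∞)) (by simp)).clm_apply contDiff_const,
    hasCompactSupport_pd hφ.2 i⟩

lemma iterate_pd (hφ : IsTestFunction φ) (i : Fin m) (k : ℕ) :
    IsTestFunction ((pd i)^[k] φ) := by
  induction k with
  | zero => exact hφ
  | succ k ih => exact Function.iterate_succ_apply' (pd i) k φ ▸ ih.pd i

end IsTestFunction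

variable [CompleteSpace W] {φ : EuclideanSpace ℝ (Fin (n - 1)) → ℝ} {κ₀ : ℝ}

lemma exists_linear_decay_tangentialConv (hn : 0 < n) (hκ₀ : 0 < κ₀) (hA : IsElliptic A κ₀)
    (hφ : IsTestFunction φ) (hu : ContDiffOn ℝ 2 u (halfSpace (lastIdx n hn)))
    (hsol : SolvesSystemOn A u (halfSpace (lastIdx n hn))) (hp : 1 ≤ p)
    (hN : ∫⁻ x', radialMax u x' ^ p < ∞)
    (hlim : ∀ᵐ x', Tendsto (fun t => u (toUp x' t)) (𝓝[>] 0) (𝓝 0)) :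
    ∃ D, ∀ x ∈ halfSpace (lastIdx n hn),
      ‖tangentialConv (boundaryInclusion n) φ u x‖ ≤ D * x (lastIdx n hn) := by
  have hu₁ : ContDiffOn ℝ 1 u (halfSpace (lastIdx n hn)) := hu.of_le one_le_two
  have hbd {ψ} (hψ : IsTestFunction ψ) : ∀ᶠ B in atTop, ∀ x ∈ halfSpace (lastIdx n hn),
      ‖tangentialConv (boundaryInclusion n) ψ u x‖ ≤ B := by
    obtain ⟨B, hB⟩ :=
      exists_norm_tangentialConv_le hn hψ.continuous hψ.2 hu.continuousOn hp hN
    filter_upwards [eventually_ge_atTop B] with C hC x hx using (hB x hx).trans hC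
  obtain ⟨B, hB₀, hB₁, hB₂⟩ := ((hbd hφ).and ((eventually_all.2 fun i => hbd (hφ.pd i)).and
    (eventually_all.2 fun i => eventually_all.2 fun j => hbd ((hφ.pd j).pd i)))).exists
  refine exists_linear_decay_of_tangential hκ₀ hA
    (contDiffOn_tangentialConv (boundaryInclusion_lastIdx hn) hφ.continuous hφ.2 (k := 2) hu)
    (solvesSystemOn_tangentialConv (boundaryInclusion_lastIdx hn) hφ.continuous hφ.2 hu hsol)
    hB₀ ?_ ?_ fun x hx => tendsto_tangentialConv_add_smul_single_nhdsGT_zero hn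
      hφ.continuous hφ.2 hu.continuousOn hp hN hlim hx
  · intro x hx r hr
    obtain ⟨i, rfl⟩ := exists_finUp_eq hn hr
    rw [pd_finUp_tangentialConv hn (hφ.contDiff 1) hφ.2 hu₁ i hx]
    exact hB₁ i x hx
  · intro x hx r hr s hs
    obtain ⟨i, rfl⟩ := exists_finUp_eq hn hr
    obtain ⟨j, rfl⟩ := exists_finUp_eq hn hs
    rw [pd_eqOn (isOpen_halfSpace _) (pd_finUp_tangentialConv hn (hφ.contDiff 1) hφ.2 hu₁ j) _ hx,
      pd_finUp_tangentialConv hn ((hφ.pd j).contDiff 1) (hφ.pd j).2 hu₁ i hx]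
    exact hB₂ i j x hx

lemma tangentialConv_eqOn_zero (hn : 2 ≤ n) (hκ₀ : 0 < κ₀) (hA : IsElliptic A κ₀)
    (hφ : IsTestFunction φ) (hu : ContDiffOn ℝ 2 u (halfSpace (lastIdx n (by omega))))
    (hsol : SolvesSystemOn A u (halfSpace (lastIdx n (by omega)))) (hp : 1 ≤ p)
    (hN : ∫⁻ x', radialMax u x' ^ p < ∞)
    (hlim : ∀ᵐ x', Tendsto (fun t => u (toUp x' t)) (𝓝[>] 0) (𝓝 0)) :
    Set.EqOn (tangentialConv (boundaryInclusion n) φ u) 0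
      (halfSpace (lastIdx n (by omega))) := by
  have hn₀ : 0 < n := by omega
  let i : Fin (n - 1) := ⟨0, by omega⟩
  have hφk := hφ.iterate_pd i
  refine tangentialConv_eqOn_zero_of_pd_eqOn_zero hn₀ hφ.continuous hφ.2
    (hu.of_le one_le_two) hp hN i ?_
  refine pd_eqOn_zero_of_linear_decay hκ₀ hA (finUp_ne_lastIdx hn₀ i)
    (v := fun k => tangentialConv (boundaryInclusion n) ((pd i)^[k] φ) u)
    (fun k => contDiffOn_tangentialConv (boundaryInclusion_lastIdx hn₀) (hφk k).continuous
      (hφk k).2 (k := 2) hu)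
    (fun k => solvesSystemOn_tangentialConv (boundaryInclusion_lastIdx hn₀) (hφk k).continuous
      (hφk k).2 hu hsol)
    (fun k => exists_linear_decay_tangentialConv hn₀ hκ₀ hA (hφk k) hu hsol hp hN hlim)
    (fun k => exists_norm_tangentialConv_le hn₀ (hφk k).continuous (hφk k).2 hu.continuousOn hp hN)
    fun k => ?_
  simp only [Function.iterate_succ_apply']
  exact pd_finUp_tangentialConv hn₀ ((hφk k).contDiff 1) (hφk k).2 (hu.of_le one_le_two) i

theorem statement0_general (hn : 2 ≤ n) (hκ₀ : 0 < κ₀) (hA : IsElliptic A κ₀)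
    (hu : ContDiffOn ℝ 2 u (upperHalfSpace n)) (hsol : SolvesSystemOn A u (upperHalfSpace n))
    (hp : 1 ≤ p) (hN : ∫⁻ x', radialMax u x' ^ p < ∞)
    (hlim : ∀ᵐ x', Tendsto (fun t => u (toUp x' t)) (𝓝[>] 0) (𝓝 0)) :
    ∀ x ∈ upperHalfSpace n, u x = 0 := by
  have hn₀ : 0 < n := by omega
  rw [upperHalfSpace_eq_halfSpace hn₀] at hu hsol ⊢
  exact eqOn_zero_of_forall_tangentialConv_eqOn_zero (boundaryInclusion_lastIdx hn₀)
    hu.continuousOn fun φ hφ hc => tangentialConv_eqOn_zero hn hκ₀ hA ⟨hφ, hc⟩ hu hsol hp hN hlim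

end Uniqueness

section CoefficientTensor

variable {n M : ℕ}

/-- The operators `A_{rs}` on `ℂ^M` with matrices `(a^{αβ}_{rs})_{αβ}`. -/
def coeffOperator (A : Fin n → Fin n → Fin M → Fin M → ℂ) (r s : Fin n) :
    EuclideanSpace ℂ (Fin M) →L[ℂ] EuclideanSpace ℂ (Fin M) :=
  Matrix.toEuclideanCLM (𝕜 := ℂ) (Matrix.of (A r s))

lemma coeffOperator_apply (A : Fin n → Fin n → Fin M → Fin M → ℂ) (r s : Fin n)
    (η : EuclideanSpace ℂ (Fin M)) (α : Fin M) :
    coeffOperator A r s η α = ∑ β, A r s α β * η β := by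
  simp [coeffOperator, Matrix.ofLp_toEuclideanCLM, Matrix.mulVec, dotProduct]

lemma LegendreHadamard.exists_isElliptic {A : Fin n → Fin n → Fin M → Fin M → ℂ}
    (hA : LegendreHadamard A) : ∃ κ₀, 0 < κ₀ ∧ IsElliptic (coeffOperator A) κ₀ := by
  obtain ⟨κ₀, hκ₀, hA⟩ := hA
  refine ⟨κ₀, hκ₀, fun ξ η => ?_⟩
  convert hA ξ η using 1
  · simp only [norm_smul, mul_pow, Real.norm_eq_abs, sq_abs, EuclideanSpace.norm_sq_eq,
      Finset.sum_mul, mul_assoc]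
  · simp only [gradForm, ← Complex.re_sum, PiLp.inner_apply, coeffOperator_apply, PiLp.smul_apply,
      RCLike.inner_apply, Finset.sum_mul, Complex.real_smul, map_mul, Complex.conj_ofReal]
    refine congrArg Complex.re (Finset.sum_congr rfl fun r _ => Finset.sum_congr rfl fun s _ =>
      Finset.sum_congr rfl fun a _ => Finset.sum_congr rfl fun b _ => ?_)
    ring

lemma solvesSystemOn_coeffOperator {A : Fin n → Fin n → Fin M → Fin M → ℂ}
    {u : EuclideanSpace ℝ (Fin n) → EuclideanSpace ℂ (Fin M)} {U : Set (EuclideanSpace ℝ (Fin n))}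
    (hU : IsOpen U) (hu : ContDiffOn ℝ 2 u U)
    (hLu : ∀ x ∈ U, ∀ α, ∑ r, ∑ s, ∑ β, A r s α β * pd r (pd s (fun y => u y β)) x = 0) :
    SolvesSystemOn (coeffOperator A) u U := by
  have hd {v : EuclideanSpace ℝ (Fin n) → EuclideanSpace ℂ (Fin M)} (hv : ContDiffOn ℝ 1 v U)
      (s : Fin n) (β : Fin M) : Set.EqOn (pd s fun y => v y β) (fun y => pd s v y β) U :=
    fun y hy => pd_clm_comp ((EuclideanSpace.proj (𝕜 := ℂ) β).restrictScalars ℝ)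
      ((hv.differentiableOn one_ne_zero).differentiableAt (hU.mem_nhds hy)) s
  intro x hx
  ext α
  rw [PiLp.zero_apply, ← hLu x hx α]
  simp only [WithLp.ofLp_sum, Finset.sum_apply, coeffOperator_apply]
  refine Finset.sum_congr rfl fun r _ => Finset.sum_congr rfl fun s _ =>
    Finset.sum_congr rfl fun β _ => ?_
  rw [pd_eqOn hU (hd (hu.of_le one_le_two) s β) r hx,
    hd (contDiffOn_pd hU hu (by norm_num) s) r β hx]

end CoefficientTensor

/-- Uniqueness for the `L^p` Dirichlet problem in the upper half space:
a `C²` null solution of an elliptic system with `N_κ u ∈ L^p` and vanishing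
nontangential trace a.e. vanishes identically in `ℝⁿ₊`. -/
theorem statement0
    (n M : ℕ) (hn : 2 ≤ n) (hM : 1 ≤ M)
    (A : Fin n → Fin n → Fin M → Fin M → ℂ)
    (hA : LegendreHadamard A)
    (p : ℝ) (hp : 1 < p) (κ : ℝ) (hκ : 0 < κ)
    (u : EuclideanSpace ℝ (Fin n) → EuclideanSpace ℂ (Fin M))
    (hu : ContDiffOn ℝ 2 u (upperHalfSpace n))
    (hLu : ∀ x ∈ upperHalfSpace n, ∀ α : Fin M,
      ∑ r, ∑ s, ∑ β, A r s α β * pd r (pd s (fun y => u y β)) x = 0)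
    (hN : ∫⁻ x' : EuclideanSpace ℝ (Fin (n - 1)), (ntMax κ u x') ^ p < ∞)
    (hlim : ∀ᵐ x' : EuclideanSpace ℝ (Fin (n - 1)),
      Filter.Tendsto (fun q : (EuclideanSpace ℝ (Fin (n - 1))) × ℝ => u (toUp q.1 q.2))
        (ntFilter κ x') (nhds 0)) :
    ∀ x ∈ upperHalfSpace n, u x = 0 := by
  obtain ⟨κ₀, hκ₀, hA⟩ := hA.exists_isElliptic
  have hrad : ∫⁻ x', radialMax u x' ^ p < ∞ :=
    (lintegral_mono fun x' => ENNReal.rpow_le_rpow (radialMax_le_ntMax hκ u x')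
      (by linarith)).trans_lt hN
  have hopen : IsOpen (upperHalfSpace n) :=
    upperHalfSpace_eq_halfSpace (zero_lt_two.trans_le hn) ▸ isOpen_halfSpace _
  refine statement0_general hn hκ₀ hA hu (solvesSystemOn_coeffOperator hopen hu hLu) hp.le hrad ?_
  filter_upwards [hlim] with x' hx'
  exact hx'.comp (tendsto_prodMk_nhdsGT_ntFilter hκ x')

end
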